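/- arXiv:1603.07113 — 2 statements merged into one kernel-verified Lean document; each statement's English description precedes it below -/
import Mathlib

section
/- Let λ be a real number with λ ≥ (9 + √33)/12. If f is a close-to-convex function on the unit disk with Taylor coefficients a_k, then |λ a_3² − a_5| ≤ 9λ − 5. -/
open Complex Metric

/-- The k-th Taylor coefficient of `f` at `0`: `a_k = f^{(k)}(0)/k!`. -/
noncomputable def taylorCoeff (f : ℂ → ℂ) (k : ℕ) : ℂ :=
  iteratedDeriv k f 0 / (Nat.factorial k)

/-- `g` is a (normalized) starlike function on the unit disk. -/
def IsStarlikeFn (g : ℂ → ℂ) : Prop :=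
  DifferentiableOn ℂ g (ball (0 : ℂ) 1) ∧ g 0 = 0 ∧ deriv g 0 = 1 ∧
    ∀ z ∈ ball (0 : ℂ) 1 \ {0}, 0 < (z * deriv g z / g z).re

/-- `f` is a (normalized) close-to-convex function on the unit disk. -/
def IsCloseToConvex (f : ℂ → ℂ) : Prop :=
  DifferentiableOn ℂ f (ball (0 : ℂ) 1) ∧ f 0 = 0 ∧ deriv f 0 = 1 ∧
    ∃ θ : ℝ, ∃ g : ℂ → ℂ, IsStarlikeFn g ∧
      ∀ z ∈ ball (0 : ℂ) 1 \ {0},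
        0 < (Complex.exp (θ * Complex.I) * z * deriv f z / g z).re

lemma core_real (l : ℝ) (hl : (9 + Real.sqrt 33) / 12 ≤ l) (a b c d : ℝ)
    (h1 : a ^ 2 + b ^ 2 ≤ 1) (h2 : c ^ 2 + d ^ 2 ≤ 1) :
    l * (2 * a - c) ^ 2 - 3 * (a ^ 2 - b ^ 2) + 2 * (a * c - b * d) ≤ 9 * l - 5 := by
  set m : ℝ := (9 + Real.sqrt 33) / 12 with hm
  have hs : Real.sqrt 33 ^ 2 = 33 := Real.sq_sqrt (by norm_num)
  have hs5 : (5.7 : ℝ) ≤ Real.sqrt 33 := by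
    apply Real.le_sqrt_of_sq_le; norm_num
  have hq : (6 * m - 7) * (3 * m - 1) = 1 := by rw [hm]; nlinarith
  have hk : 0 < 6 * m - 7 := by rw [hm]; linarith
  have ha : a ^ 2 ≤ 1 := by nlinarith [sq_nonneg b]
  have hc : c ^ 2 ≤ 1 := by nlinarith [sq_nonneg d]
  obtain ⟨ha1, ha2⟩ := abs_le.1 (abs_le_one_iff_mul_self_le_one.2 (by nlinarith : a * a ≤ 1))
  obtain ⟨hc1, hc2⟩ := abs_le.1 (abs_le_one_iff_mul_self_le_one.2 (by nlinarith : c * c ≤ 1))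
  have h9 : 0 ≤ 9 - (2 * a - c) ^ 2 := by nlinarith
  have h10 : 0 ≤ (l - m) * (9 - (2 * a - c) ^ 2) := mul_nonneg (by linarith) h9
  have h11 : -2 * (b * d) ≤ (6 * m - 7) * b ^ 2 + (3 * m - 1) * d ^ 2 := by
    have e : (6 * m - 7) * ((6 * m - 7) * b ^ 2 + (3 * m - 1) * d ^ 2 + 2 * (b * d))
        = ((6 * m - 7) * b + d) ^ 2 := by
      linear_combination d ^ 2 * hq
    have : 0 ≤ (6 * m - 7) * ((6 * m - 7) * b ^ 2 + (3 * m - 1) * d ^ 2 + 2 * (b * d)) := by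
      rw [e]; positivity
    have := nonneg_of_mul_nonneg_right this hk
    linarith
  have h12 : (3 + (6 * m - 7)) * b ^ 2 ≤ (3 + (6 * m - 7)) * (1 - a ^ 2) :=
    mul_le_mul_of_nonneg_left (by linarith) (by linarith)
  have h13 : (3 * m - 1) * d ^ 2 ≤ (3 * m - 1) * (1 - c ^ 2) :=
    mul_le_mul_of_nonneg_left (by linarith) (by linarith)
  have h14 : 0 ≤ (2 * m - 1) * (a + c) ^ 2 := mul_nonneg (by linarith) (sq_nonneg _)
  nlinarith

lemma core_complex (l : ℝ) (hl : (9 + Real.sqrt 33) / 12 ≤ l) (u v : ℂ)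
    (hu : ‖u‖ ≤ 1) (hv : ‖v‖ ≤ 1) (t : ℝ) :
    (2 * l * t * (2 * u - v) - (3 * u ^ 2 - 2 * (u * v))).re ≤ 9 * l - 5 + l * t ^ 2 := by
  have hu' : u.re ^ 2 + u.im ^ 2 ≤ 1 := by
    have := Complex.sq_norm u
    rw [Complex.normSq_apply] at this
    nlinarith [norm_nonneg u]
  have hv' : v.re ^ 2 + v.im ^ 2 ≤ 1 := by
    have := Complex.sq_norm v
    rw [Complex.normSq_apply] at this
    nlinarith [norm_nonneg v]
  have h := core_real l hl u.re u.im v.re v.im hu' hv'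
  have hl0 : 0 ≤ l := le_trans (by positivity) hl
  have h2 : 0 ≤ l * (t - (2 * u.re - v.re)) ^ 2 := mul_nonneg hl0 (sq_nonneg _)
  have e : (2 * l * t * (2 * u - v) - (3 * u ^ 2 - 2 * (u * v))).re
      = 2 * l * t * (2 * u.re - v.re) - 3 * (u.re ^ 2 - u.im ^ 2)
        + 2 * (u.re * v.re - u.im * v.im) := by
    simp [pow_two]; ring
  rw [e]; nlinarith

/-- The value of the functional at the kernel point `w`. -/
lemma kernel_point (l : ℝ) (hl : (9 + Real.sqrt 33) / 12 ≤ l) (t : ℝ) (η ξ w : ℂ)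
    (hη : ‖η‖ = 1) (hξ : ‖ξ‖ = 1) (hw : ‖w‖ ≤ 1) :
    (2 * l * t / 3 * η ^ 2 * (6 * w ^ 2 + ξ * (3 * w))
      - η ^ 4 / 5 * (15 * w ^ 4 + ξ * (10 * w ^ 3))).re ≤ 9 * l - 5 + l * t ^ 2 := by
  have h := core_complex l hl (η ^ 2 * w ^ 2) (-(η ^ 2 * ξ * w)) (by
    rw [norm_mul, norm_pow, norm_pow, hη]; simpa using hw) (by
    rw [norm_neg, norm_mul, norm_mul, norm_pow, hη, hξ]; simpa using hw) t
  refine le_trans (le_of_eq ?_) h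
  congr 1
  ring

lemma kernel_bound (l : ℝ) (hl : (9 + Real.sqrt 33) / 12 ≤ l) (t : ℝ) (η c x y z : ℂ)
    (hη : ‖η‖ = 1) (hc : ‖c‖ = 1) (hx : ‖x‖ = 1) (hy : ‖y‖ = 1) (hz : ‖z‖ = 1) :
    (2 * l * t / 3 * η ^ 2 * ((x ^ 2 + y ^ 2 + z ^ 2 + x * y + y * z + z * x)
        + c * x * (x + y + z))
      - η ^ 4 / 5 * ((x ^ 4 + y ^ 4 + z ^ 4 + x ^ 3 * y + x ^ 3 * z + y ^ 3 * x + y ^ 3 * z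
          + z ^ 3 * x + z ^ 3 * y + x ^ 2 * y ^ 2 + y ^ 2 * z ^ 2 + z ^ 2 * x ^ 2
          + x ^ 2 * y * z + y ^ 2 * x * z + z ^ 2 * x * y)
        + c * x * (x ^ 3 + y ^ 3 + z ^ 3 + x ^ 2 * y + x ^ 2 * z + y ^ 2 * x + y ^ 2 * z
          + z ^ 2 * x + z ^ 2 * y + x * y * z))).re ≤ 9 * l - 5 + l * t ^ 2 := by
  have hξ : ‖c * x‖ = 1 := by rw [norm_mul, hc, hx, one_mul]
  have hcomb : ∀ α β γ : ℝ, 0 ≤ α → 0 ≤ β → 0 ≤ γ → α + β + γ = 1 →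
      ‖(α * x + β * y + γ * z : ℂ)‖ ≤ 1 := by
    intro α β γ h1 h2 h3 h
    refine (norm_add₃_le).trans ?_
    simp only [norm_mul, hx, hy, hz, Complex.norm_real, Real.norm_of_nonneg h1,
      Real.norm_of_nonneg h2, Real.norm_of_nonneg h3]
    linarith
  have K := fun (α β γ : ℝ) (h1 : 0 ≤ α) (h2 : 0 ≤ β) (h3 : 0 ≤ γ) (h : α + β + γ = 1) =>
    kernel_point l hl t η (c * x) _ hη hξ (hcomb α β γ h1 h2 h3 h)
  have k1 := K (1/9) (1/9) (7/9) (by norm_num) (by norm_num) (by norm_num) (by norm_num)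
  have k2 := K (1/9) (7/9) (1/9) (by norm_num) (by norm_num) (by norm_num) (by norm_num)
  have k3 := K (7/9) (1/9) (1/9) (by norm_num) (by norm_num) (by norm_num) (by norm_num)
  have k4 := K (1/3) (1/3) (1/3) (by norm_num) (by norm_num) (by norm_num) (by norm_num)
  have k5 := K (1/2) (1/2) 0 (by norm_num) (by norm_num) (by norm_num) (by norm_num)
  have k6 := K (1/2) 0 (1/2) (by norm_num) (by norm_num) (by norm_num) (by norm_num)
  have k7 := K 0 (1/2) (1/2) (by norm_num) (by norm_num) (by norm_num) (by norm_num)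
  clear K
  have key : ∀ (X1 X2 X3 X4 X5 X6 X7 Y : ℂ) (M : ℝ), X1.re ≤ M → X2.re ≤ M → X3.re ≤ M →
      X4.re ≤ M → X5.re ≤ M → X6.re ≤ M → X7.re ≤ M →
      Y = ((81/560 : ℝ) : ℂ) * (X1 + X2 + X3) + ((27/80 : ℝ) : ℂ) * X4
        + ((8/105 : ℝ) : ℂ) * (X5 + X6 + X7) → Y.re ≤ M := by
    intro X1 X2 X3 X4 X5 X6 X7 Y M h1 h2 h3 h4 h5 h6 h7 hY
    rw [hY]
    simp only [Complex.add_re, Complex.re_ofReal_mul]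
    linarith
  refine key _ _ _ _ _ _ _ _ _ k1 k2 k3 k4 k5 k6 k7 ?_
  push_cast
  ring
lemma avg_conj_pow (Q : ℂ → ℂ) (r : ℝ) (hr : 0 < r) (hQ : DifferentiableOn ℂ Q (closedBall 0 r))
    (k : ℕ) : Real.circleAverage (fun z => (starRingEnd ℂ z) ^ k * Q z) 0 r
      = (r : ℂ) ^ (2 * k) * taylorCoeff Q k := by
  have hr0 : (r : ℂ) ≠ 0 := by exact_mod_cast hr.ne'
  have h1 := hQ.circleIntegral_one_div_sub_center_pow_smul hr k
  rw [Real.circleAverage_eq_circleIntegral hr.ne']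
  have h2 : (∮ z in C(0, r), (z - 0)⁻¹ • ((starRingEnd ℂ z) ^ k * Q z))
      = ∮ z in C(0, r), ((r : ℂ) ^ (2 * k)) • ((1 / (z - 0) ^ (k + 1)) • Q z) := by
    refine circleIntegral.integral_congr hr.le fun z hz => ?_
    have hz' : ‖z‖ = r := by simpa using hz
    have hz0 : z ≠ 0 := by rw [← norm_pos_iff, hz']; exact hr
    have hc : starRingEnd ℂ z = (r : ℂ) ^ 2 / z := by
      rw [eq_div_iff hz0, mul_comm, Complex.mul_conj, Complex.normSq_eq_norm_sq, hz']
      push_cast; rfl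
    simp only [smul_eq_mul, sub_zero]
    rw [hc, div_pow, ← pow_mul]
    field_simp
    ring
  rw [h2, circleIntegral.integral_smul, h1, taylorCoeff]
  have : (2 * (Real.pi : ℂ) * Complex.I) ≠ 0 := Complex.two_pi_I_ne_zero
  simp only [smul_eq_mul]
  field_simp

lemma avg_pow (Q : ℂ → ℂ) (r : ℝ) (hr : 0 < r) (hQ : DifferentiableOn ℂ Q (closedBall 0 r))
    (k : ℕ) : Real.circleAverage (fun z => z ^ (k + 1) * Q z) 0 r = 0 := by
  have h : DiffContOnCl ℂ (fun z => z ^ (k + 1) * Q z) (ball 0 |r|) := by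
    rw [abs_of_pos hr]
    refine DifferentiableOn.diffContOnCl ?_
    refine DifferentiableOn.mul (by fun_prop) (hQ.mono closure_ball_subset_closedBall)
  rw [h.circleAverage]; simp

lemma herglotz_aux (p : ℂ → ℂ) (hp : DifferentiableOn ℂ p (ball 0 1)) (hp0 : p 0 = 1) (θ : ℝ)
    (hcos : 0 < Real.cos θ)
    (hre : ∀ z ∈ ball (0 : ℂ) 1, 0 ≤ (Complex.exp (θ * Complex.I) * p z).re)
    (n : ℕ) (A0 : ℂ) (A : ℕ → ℂ) (M : ℝ)
    (hA : ∀ x : ℂ, ‖x‖ = 1 → (A0 + ∑ k ∈ Finset.range n,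
      (1 + Complex.exp (-2 * θ * Complex.I)) * A k * x ^ (k + 1)).re ≤ M)
    (r : ℝ) (hr : 0 < r) (hr1 : r < 1) :
    (A0 + ∑ k ∈ Finset.range n, A k * (r : ℂ) ^ (k + 1) * taylorCoeff p (k + 1)).re ≤ M := by
  set e := Complex.exp (θ * Complex.I) with he
  set c := Complex.exp (-2 * θ * Complex.I) with hc
  have hr0 : (r : ℂ) ≠ 0 := by exact_mod_cast hr.ne'
  have hec : (1 + c) * e = ((2 * Real.cos θ : ℝ) : ℂ) := by
    rw [he, hc, add_mul, ← Complex.exp_add]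
    push_cast
    rw [Complex.two_cos, one_mul]
    congr 2; ring
  have hpc : DifferentiableOn ℂ p (closedBall 0 r) := hp.mono (closedBall_subset_ball hr1)
  have hcont : ContinuousOn p (sphere 0 |r|) := by
    rw [abs_of_pos hr]; exact hpc.continuousOn.mono sphere_subset_closedBall
  -- the complex integrand
  set F : ℂ → ℂ := fun z => ((M - A0.re : ℝ) : ℂ) • (e * p z)
      - ∑ k ∈ Finset.range n, (((1 + c) * A k * e / (2 * (r : ℂ) ^ (k + 1))) •
          ((starRingEnd ℂ z) ^ (k + 1) * p z)
        + (starRingEnd ℂ ((1 + c) * A k) * e / (2 * (r : ℂ) ^ (k + 1))) •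
          (z ^ (k + 1) * p z)) with hF
  have hi1 : CircleIntegrable (fun z => ((M - A0.re : ℝ) : ℂ) • (e * p z)) 0 r := by
    apply ContinuousOn.circleIntegrable'; fun_prop
  have hi2 : ∀ k (a : ℂ), CircleIntegrable
      (fun z => a • ((starRingEnd ℂ z) ^ (k + 1) * p z)) 0 r := by
    intro k a
    apply ContinuousOn.circleIntegrable'
    exact ContinuousOn.const_smul
      ((Complex.continuous_conj.pow (k + 1)).continuousOn.mul hcont) a
  have hi3 : ∀ k (a : ℂ), CircleIntegrable
      (fun z => a • (z ^ (k + 1) * p z)) 0 r := by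
    intro k a
    apply ContinuousOn.circleIntegrable'; fun_prop
  have hi4 : CircleIntegrable (fun z => ∑ k ∈ Finset.range n,
        (((1 + c) * A k * e / (2 * (r : ℂ) ^ (k + 1))) • ((starRingEnd ℂ z) ^ (k + 1) * p z)
        + (starRingEnd ℂ ((1 + c) * A k) * e / (2 * (r : ℂ) ^ (k + 1))) •
          (z ^ (k + 1) * p z))) 0 r := by
    refine CircleIntegrable.fun_sum _ ?_
    intro k _
    exact (hi2 k _).add (hi3 k _)
  have havg : Real.circleAverage F 0 r = ((M - A0.re : ℝ) : ℂ) * e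
      - ∑ k ∈ Finset.range n, ((1 + c) * A k * e / (2 * (r : ℂ) ^ (k + 1))) *
        ((r : ℂ) ^ (2 * (k + 1)) * taylorCoeff p (k + 1)) := by
    rw [hF, Real.circleAverage_fun_sub hi1 hi4, Real.circleAverage_fun_sum]
    · congr 1
      · rw [Real.circleAverage_fun_smul]
        have := avg_conj_pow (fun z => e * p z) r hr (by fun_prop) 0
        simp only [pow_zero, one_mul, mul_zero] at this
        rw [this]
        simp [taylorCoeff, hp0]
      · refine Finset.sum_congr rfl fun k _ => ?_
        rw [Real.circleAverage_fun_add (hi2 k _) (hi3 k _), Real.circleAverage_fun_smul,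
          Real.circleAverage_fun_smul, avg_conj_pow p r hr hpc, avg_pow p r hr hpc]
        simp
    · intro k _
      exact (hi2 k _).add (hi3 k _)
  have hFi : CircleIntegrable F 0 r := hi1.sub hi4
  have hpos : 0 ≤ (Real.circleAverage F 0 r).re := by
    have h1 := Complex.reCLM.circleAverage_comp_comm hFi
    have h2 : (Real.circleAverage F 0 r).re = Real.circleAverage (Complex.reCLM ∘ F) 0 r := by
      rw [h1]; rfl
    rw [h2]
    apply Real.circleAverage_nonneg_of_nonneg
    intro z hz
    have hz' : ‖z‖ = r := by simpa [abs_of_pos hr] using hz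
    have hx : ‖(starRingEnd ℂ z) / (r : ℂ)‖ = 1 := by
      rw [norm_div, RCLike.norm_conj, hz', Complex.norm_real, Real.norm_of_nonneg hr.le,
        div_self hr.ne']
    have hT := hA _ hx
    have hq := hre z (by rw [mem_ball_zero_iff, hz']; exact hr1)
    set S := ∑ k ∈ Finset.range n, (1 + c) * A k * ((starRingEnd ℂ z) / (r : ℂ)) ^ (k + 1) with hS
    have hFz : F z = ((M - A0.re - S.re : ℝ) : ℂ) * (e * p z) := by
      have h3 : ((S.re : ℝ) : ℂ) = (S + starRingEnd ℂ S) / 2 := by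
        rw [Complex.add_conj]; push_cast; ring
      rw [Complex.ofReal_sub _ S.re, h3, sub_mul, hF]
      simp only [smul_eq_mul]
      congr 1
      rw [hS, map_sum, ← Finset.sum_add_distrib, Finset.sum_div, Finset.sum_mul]
      refine Finset.sum_congr rfl fun k _ => ?_
      simp only [map_mul, map_pow, map_div₀, Complex.conj_conj, Complex.conj_ofReal, div_pow]
      field_simp
    simp only [Function.comp_apply, Complex.reCLM_apply]
    rw [hFz, Complex.re_ofReal_mul]
    rw [Complex.add_re] at hT
    exact mul_nonneg (by linarith) hq
  rw [havg] at hpos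
  have hfin : (((M - A0.re : ℝ) : ℂ) * e
      - ∑ k ∈ Finset.range n, ((1 + c) * A k * e / (2 * (r : ℂ) ^ (k + 1))) *
        ((r : ℂ) ^ (2 * (k + 1)) * taylorCoeff p (k + 1))).re
      = Real.cos θ * (M - (A0 + ∑ k ∈ Finset.range n,
          A k * (r : ℂ) ^ (k + 1) * taylorCoeff p (k + 1)).re) := by
    have h4 : ∑ k ∈ Finset.range n, ((1 + c) * A k * e / (2 * (r : ℂ) ^ (k + 1))) *
        ((r : ℂ) ^ (2 * (k + 1)) * taylorCoeff p (k + 1))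
        = ((Real.cos θ : ℝ) : ℂ) * ∑ k ∈ Finset.range n,
          A k * (r : ℂ) ^ (k + 1) * taylorCoeff p (k + 1) := by
      rw [Finset.mul_sum]
      refine Finset.sum_congr rfl fun k _ => ?_
      have h5 : (1 + c) * A k * e = 2 * ((Real.cos θ : ℝ) : ℂ) * A k := by
        rw [mul_right_comm, hec]; push_cast; ring
      rw [h5, two_mul (k + 1), pow_add]
      field_simp
      ring
    rw [h4, Complex.sub_re, Complex.re_ofReal_mul, Complex.re_ofReal_mul, Complex.add_re,
      he, Complex.exp_ofReal_mul_I_re]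
    ring
  rw [hfin] at hpos
  have := nonneg_of_mul_nonneg_right hpos hcos
  linarith

lemma herglotz (p : ℂ → ℂ) (hp : DifferentiableOn ℂ p (ball 0 1)) (hp0 : p 0 = 1) (θ : ℝ)
    (hcos : 0 < Real.cos θ)
    (hre : ∀ z ∈ ball (0 : ℂ) 1, 0 ≤ (Complex.exp (θ * Complex.I) * p z).re)
    (A0 A1 A2 A3 A4 : ℂ) (M : ℝ)
    (hA : ∀ x : ℂ, ‖x‖ = 1 → (A0 + (1 + Complex.exp (-2 * θ * Complex.I)) *
      (A1 * x + A2 * x ^ 2 + A3 * x ^ 3 + A4 * x ^ 4)).re ≤ M) :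
    (A0 + (A1 * taylorCoeff p 1 + A2 * taylorCoeff p 2 + A3 * taylorCoeff p 3
      + A4 * taylorCoeff p 4)).re ≤ M := by
  have h := herglotz_aux p hp hp0 θ hcos hre 4 A0
    (fun k => if k = 0 then A1 else if k = 1 then A2 else if k = 2 then A3 else A4) M (by
      intro x hx
      refine le_trans (le_of_eq ?_) (hA x hx)
      congr 1
      simp [Finset.sum_range_succ]
      ring)
  have h2 : ContinuousWithinAt (fun r : ℝ => (A0 + ∑ k ∈ Finset.range 4,
      (if k = 0 then A1 else if k = 1 then A2 else if k = 2 then A3 else A4)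
       * (r : ℂ) ^ (k + 1) * taylorCoeff p (k + 1)).re) (Set.Ioo 0 1) 1 := by
    apply Continuous.continuousWithinAt
    fun_prop
  have h3 := h2.closure_le (g := fun _ => M) (by
      rw [closure_Ioo (by norm_num)]; simp) continuousWithinAt_const
      (fun r hr => h r hr.1 hr.2)
  refine le_trans (le_of_eq ?_) h3
  congr 1
  simp [Finset.sum_range_succ]

lemma herglotz_half (h : ℂ → ℂ) (hh : DifferentiableOn ℂ h (ball 0 1)) (h0 : h 0 = 1)
    (hre : ∀ z ∈ ball (0 : ℂ) 1, 1 / 2 < (h z).re)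
    (A0 A1 A2 A3 A4 : ℂ) (M : ℝ)
    (hA : ∀ x : ℂ, ‖x‖ = 1 → (A0 +
      (A1 * x + A2 * x ^ 2 + A3 * x ^ 3 + A4 * x ^ 4)).re ≤ M) :
    (A0 + (A1 * taylorCoeff h 1 + A2 * taylorCoeff h 2 + A3 * taylorCoeff h 3
      + A4 * taylorCoeff h 4)).re ≤ M := by
  have hc : ∀ k : ℕ, taylorCoeff (fun z => 2 * h z - 1) (k + 1) = 2 * taylorCoeff h (k + 1) := by
    intro k
    have hd : ContDiffAt ℂ ((k + 1 : ℕ) : WithTop ℕ∞) h 0 :=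
      (hh.analyticAt (ball_mem_nhds _ one_pos)).contDiffAt
    unfold taylorCoeff
    rw [iteratedDeriv_fun_sub (by fun_prop) (by fun_prop), iteratedDeriv_const_mul_field,
      iteratedDeriv_const]
    simp
    ring
  have := herglotz (fun z => 2 * h z - 1) (by fun_prop) (by simp [h0]; norm_num) 0 (by simp)
    (by
      intro z hz
      have := hre z hz
      simp
      linarith) A0 (A1 / 2) (A2 / 2) (A3 / 2) (A4 / 2) M (by
      intro x hx
      refine le_trans (le_of_eq ?_) (hA x hx)
      congr 1
      simp
      ring)
  refine le_trans (le_of_eq ?_) this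
  rw [hc 0, hc 1, hc 2, hc 3]
  congr 1
  ring
lemma jack (ω : ℂ → ℂ) (hω : DifferentiableOn ℂ ω (ball 0 1)) (h0 : ω 0 = 0) (z0 : ℂ)
    (hz1 : ‖z0‖ < 1) (hz0 : z0 ≠ 0) (hn : ‖ω z0‖ = 1)
    (hlt : ∀ z, ‖z‖ < ‖z0‖ → ‖ω z‖ ≤ 1) :
    ∃ m : ℝ, 1 ≤ m ∧ z0 * deriv ω z0 = m * ω z0 := by
  have hR : 0 < ‖z0‖ := norm_pos_iff.2 hz0
  have hsch : ∀ z, ‖z‖ < ‖z0‖ → ‖ω z‖ ≤ ‖z‖ / ‖z0‖ := by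
    intro z hz
    have := Complex.dist_le_div_mul_dist_of_mapsTo_ball (f := ω) (c := 0) (R₁ := ‖z0‖) (R₂ := 1)
      (hω.mono (ball_subset_ball hz1.le)) (by
        intro w hw
        rw [h0, mem_closedBall_zero_iff]
        exact hlt w (by simpa using hw)) (z := z) (by simpa using hz)
    rw [h0, dist_zero_right, dist_zero_right] at this
    rw [div_eq_inv_mul, ← one_div]; exact this
  set D := starRingEnd ℂ (ω z0) * (deriv ω z0 * z0) with hD
  have hder : HasDerivAt ω (deriv ω z0) z0 :=
    (hω.differentiableAt (isOpen_ball.mem_nhds (by simpa using hz1))).hasDerivAt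
  have key : ∀ τ : ℝ, (D * (-1 + τ * Complex.I)).re ≤ -1 := by
    intro τ
    set ζ : ℂ := -1 + τ * Complex.I with hζ
    have hζre : ζ.re = -1 := by simp [hζ]
    have d1 : HasDerivAt (fun s : ℝ => z0 * Complex.exp (s * ζ)) (z0 * ζ) 0 := by
      have e1 : HasDerivAt (fun s : ℂ => z0 * Complex.exp (s * ζ)) (z0 * ζ) ((0 : ℝ) : ℂ) := by
        have := ((hasDerivAt_mul_const (x := ((0 : ℝ) : ℂ)) ζ).cexp).const_mul z0
        simpa using this
      exact e1.comp_ofReal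
    have d2 : HasDerivAt (fun s : ℝ => ω (z0 * Complex.exp (s * ζ))) (deriv ω z0 * (z0 * ζ)) 0 := by
      have hder' : HasDerivAt ω (deriv ω z0) (z0 * Complex.exp (((0 : ℝ) : ℂ) * ζ)) := by
        simpa using hder
      exact hder'.comp (0 : ℝ) d1
    have d3 := d2.norm_sq
    have d4 : HasDerivAt (fun s : ℝ => Real.exp (-2 * s)) (-2) 0 := by
      have := ((hasDerivAt_id (0 : ℝ)).const_mul (-2)).exp
      simpa using this
    have d5 := (d3.sub d4).tendsto_slope_zero_right
    have hle := le_of_tendsto d5 (b := 0) (by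
      filter_upwards [self_mem_nhdsWithin] with s hs
      have hs : 0 < s := hs
      have hnorm : ‖z0 * Complex.exp (s * ζ)‖ = ‖z0‖ * Real.exp (-s) := by
        rw [norm_mul, Complex.norm_exp, Complex.re_ofReal_mul, hζre]; ring_nf
      have hexp : Real.exp (-s) < 1 := by rw [Real.exp_lt_one_iff]; linarith
      have hb := hsch (z0 * Complex.exp (s * ζ)) (by
        rw [hnorm]; nlinarith)
      rw [hnorm, mul_div_cancel_left₀ _ hR.ne'] at hb
      have hb2 : ‖ω (z0 * Complex.exp (s * ζ))‖ ^ 2 ≤ Real.exp (-2 * s) := by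
        have : Real.exp (-2 * s) = Real.exp (-s) ^ 2 := by
          rw [← Real.exp_nat_mul]; ring_nf
        rw [this]
        exact pow_le_pow_left₀ (norm_nonneg _) hb 2
      simp only [Pi.sub_apply, smul_eq_mul, zero_add]
      apply mul_nonpos_of_nonneg_of_nonpos (by positivity)
      simp [hn]
      simpa using hb2)
    simp only [Complex.inner] at hle
    simp only [Complex.ofReal_zero, zero_mul, Complex.exp_zero, mul_one] at hle
    have : starRingEnd ℂ (ω z0) * (deriv ω z0 * (z0 * ζ)) = D * ζ := by rw [hD]; ring
    rw [mul_comm _ (starRingEnd ℂ (ω z0)), this] at hle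
    linarith
  have hexp : ∀ τ : ℝ, -D.re - τ * D.im ≤ -1 := by
    intro τ
    have := key τ
    simp at this
    linarith
  have him : D.im = 0 := by
    by_contra hne
    have := hexp (-(D.re + 1) / D.im)
    rw [div_mul_cancel₀ _ hne] at this
    linarith
  have hre : 1 ≤ D.re := by
    have := hexp 0; linarith
  refine ⟨D.re, hre, ?_⟩
  have hDr : (D.re : ℂ) = D := by
    apply Complex.ext <;> simp [him]
  rw [hDr, hD]
  have hcc : ω z0 * starRingEnd ℂ (ω z0) = 1 := by
    rw [Complex.mul_conj, Complex.normSq_eq_norm_sq, hn]; simp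
  linear_combination (-(z0 * deriv ω z0)) * hcc

lemma marx (g : ℂ → ℂ) (hg : IsStarlikeFn g) :
    ∃ h : ℂ → ℂ, DifferentiableOn ℂ h (ball 0 1) ∧ h 0 = 1 ∧
      (∀ z ∈ ball (0 : ℂ) 1, g z = z * h z ^ 2) ∧ (∀ z ∈ ball (0 : ℂ) 1, h z ≠ 0) ∧
      ∀ z ∈ ball (0 : ℂ) 1, 1 / 2 < (h z).re := by
  obtain ⟨hgd, hg0, hg1, hgs⟩ := hg
  have h0mem : (0 : ℂ) ∈ ball (0 : ℂ) 1 := by simp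
  set G := dslope g 0 with hG
  have hGd : DifferentiableOn ℂ G (ball 0 1) :=
    (Complex.differentiableOn_dslope (ball_mem_nhds _ one_pos)).2 hgd
  have hG0 : G 0 = 1 := by rw [hG, dslope_same, hg1]
  have hgG : ∀ z, g z = z * G z := by
    intro z
    have := sub_smul_dslope g 0 z
    simp only [sub_zero, smul_eq_mul, hg0] at this
    exact this.symm
  have hGne : ∀ z ∈ ball (0 : ℂ) 1, G z ≠ 0 := by
    intro z hz hzero
    by_cases h : z = 0
    · rw [h, hG0] at hzero; exact one_ne_zero hzero
    · have := hgs z ⟨hz, h⟩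
      rw [hgG z, hzero] at this
      simp at this
  have hGat : ∀ z ∈ ball (0 : ℂ) 1, HasDerivAt G (deriv G z) z := fun z hz =>
    (hGd.differentiableAt (isOpen_ball.mem_nhds hz)).hasDerivAt
  have hq : ∀ z ∈ ball (0 : ℂ) 1, 0 < (1 + z * (deriv G z / G z)).re := by
    intro z hz
    by_cases h : z = 0
    · simp [h]
    · have h1 := hgs z ⟨hz, h⟩
      have h2 : deriv g z = G z + z * deriv G z := by
        have : g = fun z => z * G z := funext hgG
        have h3 := (hasDerivAt_id z).mul (hGat z hz)
        have h4 : HasDerivAt g (1 * G z + z * deriv G z) z := by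
          rw [this]; exact h3
        rw [h4.deriv, one_mul]
      have h5 : z * deriv g z / g z = 1 + z * (deriv G z / G z) := by
        have := hGne z hz
        rw [h2, hgG z]; field_simp
      rwa [h5] at h1
  obtain ⟨L, hL⟩ := (DifferentiableOn.isExactOn_ball (f := fun z => deriv G z / G z)
    ((hGd.deriv isOpen_ball).div hGd hGne))
  -- `k = 1/h`
  set k : ℂ → ℂ := fun z => Complex.exp (-(L z - L 0) / 2) with hk
  have hkd : ∀ z ∈ ball (0 : ℂ) 1, HasDerivAt k (-(k z * (deriv G z / G z) / 2)) z := by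
    intro z hz
    have := ((((hL z hz).sub_const (L 0)).neg).div_const 2).cexp
    convert! this using 1
    simp only [hk, Pi.neg_apply]; ring
  have hk0 : k 0 = 1 := by simp [hk]
  have hkne : ∀ z, k z ≠ 0 := fun z => Complex.exp_ne_zero _
  have hconst : ∀ z ∈ ball (0 : ℂ) 1, G z * k z ^ 2 = 1 := by
    intro z hz
    have hd : ∀ w ∈ ball (0 : ℂ) 1, HasDerivAt (fun w => G w * k w ^ 2) 0 w := by
      intro w hw
      have := (hGat w hw).mul ((hkd w hw).pow 2)
      convert! this using 1
      have := hGne w hw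
      simp
      field_simp
      ring
    have := isOpen_ball.is_const_of_deriv_eq_zero (convex_ball (0 : ℂ) 1).isPreconnected
      (fun w hw => (hd w hw).differentiableAt.differentiableWithinAt)
      (fun w hw => (hd w hw).deriv) hz h0mem
    simpa [hG0, hk0] using this
  have hkdiff : DifferentiableOn ℂ k (ball 0 1) := fun w hw =>
    (hkd w hw).differentiableAt.differentiableWithinAt
  have hωd : DifferentiableOn ℂ (fun z => 1 - k z) (ball 0 1) := by fun_prop
  have hω : ∀ z ∈ ball (0 : ℂ) 1, ‖1 - k z‖ < 1 := by
    by_contra hcon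
    push Not at hcon
    obtain ⟨z1, hz1, hz1n⟩ := hcon
    rw [mem_ball_zero_iff] at hz1
    have hsub : closedBall (0 : ℂ) ‖z1‖ ⊆ ball 0 1 := closedBall_subset_ball hz1
    have hcont : ContinuousOn (fun z => ‖1 - k z‖) (closedBall (0 : ℂ) ‖z1‖) :=
      (hωd.continuousOn.mono hsub).norm
    have hcomp : IsCompact (closedBall (0 : ℂ) ‖z1‖ ∩ (fun z => ‖1 - k z‖) ⁻¹' Set.Ici 1) := by
      refine (isCompact_closedBall (0 : ℂ) ‖z1‖).of_isClosed_subset ?_ Set.inter_subset_left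
      exact hcont.preimage_isClosed_of_isClosed isClosed_closedBall isClosed_Ici
    obtain ⟨z0, ⟨hz0b, hz0n⟩, hmin⟩ := hcomp.exists_isMinOn ⟨z1, by simp, hz1n⟩
      (continuous_norm.continuousOn)
    have hz0b' : z0 ∈ ball (0 : ℂ) 1 := hsub hz0b
    rw [mem_closedBall_zero_iff] at hz0b
    have hz0n : 1 ≤ ‖1 - k z0‖ := hz0n
    have hz0 : z0 ≠ 0 := by
      rintro rfl
      rw [hk0] at hz0n
      norm_num at hz0n
    have hlt : ∀ z, ‖z‖ < ‖z0‖ → ‖1 - k z‖ ≤ 1 := by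
      intro z hz
      by_contra hc
      push Not at hc
      have : ‖z0‖ ≤ ‖z‖ := hmin ⟨by
        rw [mem_closedBall_zero_iff]; linarith, hc.le⟩
      linarith
    have hle : ‖1 - k z0‖ ≤ 1 := by
      have hcl : z0 ∈ closure (ball (0 : ℂ) ‖z0‖) := by
        rw [closure_ball _ (norm_ne_zero_iff.2 hz0)]; simp
      have hcw : ContinuousWithinAt (fun z => ‖1 - k z‖) (ball (0 : ℂ) ‖z0‖) z0 :=
        ((hωd.continuousOn.continuousAt (isOpen_ball.mem_nhds hz0b')).norm).continuousWithinAt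
      exact ContinuousWithinAt.closure_le (f := fun z => ‖1 - k z‖) (g := fun _ => (1 : ℝ))
        (s := ball (0 : ℂ) ‖z0‖) hcl hcw continuousWithinAt_const
        (fun z hz => hlt z (mem_ball_zero_iff.1 hz))
    have hn : ‖1 - k z0‖ = 1 := le_antisymm hle hz0n
    obtain ⟨m, hm1, hm⟩ := jack (fun z => 1 - k z) hωd (by simp [hk0]) z0
      (by simpa using hz0b') hz0 hn hlt
    have hder : deriv (fun z => 1 - k z) z0 = k z0 * (deriv G z0 / G z0) / 2 := by
      rw [((hkd z0 hz0b').const_sub 1).deriv]; ring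
    rw [hder] at hm
    have hQ : z0 * (deriv G z0 / G z0) = ((2 * m : ℝ) : ℂ) * ((1 - k z0) / k z0) := by
      have := hkne z0
      have h2 : (z0 * (deriv G z0 / G z0)) * k z0 = 2 * (m * (1 - k z0)) := by
        rw [← hm]; ring
      have h3 : ((2 * m : ℝ) : ℂ) * ((1 - k z0) / k z0) = (2 * (m * (1 - k z0))) / k z0 := by
        push_cast; ring
      rw [h3, eq_div_iff this, h2]
    have hpos := hq z0 hz0b'
    rw [hQ, Complex.add_re, Complex.re_ofReal_mul] at hpos
    have hhalf : ((1 - k z0) / k z0).re = -1 / 2 := by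
      have hns : Complex.normSq (1 - k z0) = 1 := by rw [Complex.normSq_eq_norm_sq, hn]; norm_num
      have hkk : Complex.normSq (k z0) ≠ 0 := by simpa using hkne z0
      rw [Complex.div_re]
      rw [Complex.normSq_apply] at hns
      simp only [Complex.sub_re, Complex.sub_im, Complex.one_re, Complex.one_im] at hns ⊢
      rw [← add_div, div_eq_iff hkk, Complex.normSq_apply]
      nlinarith
    rw [hhalf] at hpos
    simp at hpos
    linarith
  refine ⟨fun z => (k z)⁻¹, hkdiff.inv (fun z _ => hkne z), by simp [hk0], ?_,
    fun z _ => inv_ne_zero (hkne z), ?_⟩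
  · intro z hz
    have h1 := hconst z hz
    have h2 := hkne z
    rw [hgG z]
    have : G z = (k z)⁻¹ ^ 2 := by
      field_simp; exact h1
    rw [this]
  · intro z hz
    have h1 := hω z hz
    have h2 : Complex.normSq (1 - k z) < 1 := by
      rw [Complex.normSq_eq_norm_sq]; nlinarith [norm_nonneg (1 - k z)]
    have hkk : 0 < Complex.normSq (k z) := Complex.normSq_pos.2 (hkne z)
    simp only [Complex.inv_re]
    rw [lt_div_iff₀ hkk]
    rw [Complex.normSq_apply] at h2 ⊢
    simp only [Complex.sub_re, Complex.sub_im, Complex.one_re, Complex.one_im] at h2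
    nlinarith

lemma taylorCoeff_mul (p q : ℂ → ℂ) (hp : AnalyticAt ℂ p 0) (hq : AnalyticAt ℂ q 0) (n : ℕ) :
    taylorCoeff (fun z => p z * q z) n
      = ∑ i ∈ Finset.range (n + 1), taylorCoeff p i * taylorCoeff q (n - i) := by
  unfold taylorCoeff
  rw [iteratedDeriv_fun_mul hp.contDiffAt hq.contDiffAt, Finset.sum_div]
  refine Finset.sum_congr rfl fun i hi => ?_
  have hi : i ≤ n := Nat.lt_succ_iff.1 (Finset.mem_range.1 hi)
  have h := Nat.choose_mul_factorial_mul_factorial hi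
  have h' : ((n.choose i : ℕ) : ℂ) * (i.factorial : ℂ) * ((n - i).factorial : ℂ)
      = (n.factorial : ℂ) := by exact_mod_cast h
  have h1 : (i.factorial : ℂ) ≠ 0 := by exact_mod_cast i.factorial_ne_zero
  have h2 : ((n - i).factorial : ℂ) ≠ 0 := by exact_mod_cast (n - i).factorial_ne_zero
  have h3 : (n.factorial : ℂ) ≠ 0 := by exact_mod_cast n.factorial_ne_zero
  rw [div_mul_div_comm, div_eq_div_iff h3 (mul_ne_zero h1 h2), ← h']
  ring

lemma taylorCoeff_deriv (f : ℂ → ℂ) (n : ℕ) :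
    ((n : ℂ) + 1) * taylorCoeff f (n + 1) = taylorCoeff (deriv f) n := by
  unfold taylorCoeff
  rw [iteratedDeriv_succ', Nat.factorial_succ]
  have h3 : (n.factorial : ℂ) ≠ 0 := by exact_mod_cast n.factorial_ne_zero
  have h4 : (n : ℂ) + 1 ≠ 0 := by exact_mod_cast n.succ_ne_zero
  push_cast
  field_simp

lemma cos_pos_of (p : ℂ → ℂ) (hp : DifferentiableOn ℂ p (ball 0 1)) (hp0 : p 0 = 1) (θ : ℝ)
    (hre : ∀ z ∈ ball (0 : ℂ) 1, z ≠ 0 → 0 < (Complex.exp (θ * I) * p z).re) :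
    0 < Real.cos θ := by
  by_contra hc
  push Not at hc
  have hval : (Complex.exp (θ * I) * p 0).re = Real.cos θ := by
    rw [hp0, mul_one, Complex.exp_ofReal_mul_I_re]
  have h0 : (0 : ℂ) ∈ ball (0 : ℂ) 1 := by simp
  have hd : DifferentiableOn ℂ (fun z => Complex.exp (-(Complex.exp (θ * I) * p z)))
      (ball 0 1) := by fun_prop
  have hmax : IsMaxOn (norm ∘ fun z => Complex.exp (-(Complex.exp (θ * I) * p z)))
      (ball 0 1) 0 := by
    intro z hz
    simp only [Set.mem_ofPred_eq, Function.comp, Complex.norm_exp, Complex.neg_re, Real.exp_le_exp]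
    by_cases h : z = 0
    · rw [h]
    · have := hre z hz h
      rw [hval]; linarith
  have hhalf : (1 / 2 : ℂ) ∈ ball (0 : ℂ) 1 := by
    rw [mem_ball_zero_iff]; norm_num
  have := Complex.norm_eqOn_of_isPreconnected_of_isMaxOn (convex_ball (0 : ℂ) 1).isPreconnected
    isOpen_ball hd h0 hmax hhalf
  simp only [Function.comp, Function.const, Complex.norm_exp, Complex.neg_re,
    Real.exp_eq_exp, hval] at this
  have h2 := hre _ hhalf (by norm_num)
  linarith

lemma functional_bound (l : ℝ) (hl : (9 + Real.sqrt 33) / 12 ≤ l) (t : ℝ) (η : ℂ) (hη : ‖η‖ = 1)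
    (p h : ℂ → ℂ) (hp : DifferentiableOn ℂ p (ball 0 1)) (hp0 : p 0 = 1) (θ : ℝ)
    (hcos : 0 < Real.cos θ)
    (hre : ∀ z ∈ ball (0 : ℂ) 1, 0 ≤ (Complex.exp (θ * I) * p z).re)
    (hh : DifferentiableOn ℂ h (ball 0 1)) (h0 : h 0 = 1)
    (hhre : ∀ z ∈ ball (0 : ℂ) 1, 1 / 2 < (h z).re) (P1 P2 P3 P4 a1 a2 a3 a4 : ℂ)
    (hP1 : P1 = taylorCoeff p 1) (hP2 : P2 = taylorCoeff p 2) (hP3 : P3 = taylorCoeff p 3)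
    (hP4 : P4 = taylorCoeff p 4) (ha1 : a1 = taylorCoeff h 1) (ha2 : a2 = taylorCoeff h 2)
    (ha3 : a3 = taylorCoeff h 3) (ha4 : a4 = taylorCoeff h 4) :
    (2 * l * t / 3 * η ^ 2 * (P2 + P1 * (a1 + a1) + (a2 + a1 * a1 + a2))
      - η ^ 4 / 5 * (P4 + P3 * (a1 + a1) + P2 * (a2 + a1 * a1 + a2)
        + P1 * (a3 + a2 * a1 + a1 * a2 + a3)
        + (a4 + a3 * a1 + a2 * a2 + a1 * a3 + a4))).re ≤ 9 * l - 5 + l * t ^ 2 := by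
  have hc : ‖Complex.exp (-2 * θ * I)‖ = 1 := by
    rw [Complex.norm_exp]; simp
  set K : ℂ := 2 * l * t / 3 * η ^ 2 with hK
  set E : ℂ := η ^ 4 / 5 with hE
  have s1 : ∀ y z : ℂ, ‖y‖ = 1 → ‖z‖ = 1 →
      (K * (P2 + P1 * (y + z) + (y ^ 2 + y * z + z ^ 2))
      - E * (P4 + P3 * (y + z) + P2 * (y ^ 2 + y * z + z ^ 2)
        + P1 * (y ^ 3 + y ^ 2 * z + y * z ^ 2 + z ^ 3)
        + (y ^ 4 + y ^ 3 * z + y ^ 2 * z ^ 2 + y * z ^ 3 + z ^ 4))).re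
        ≤ 9 * l - 5 + l * t ^ 2 := by
    intro y z hy hz
    have := herglotz p hp hp0 θ hcos hre
      (K * (y ^ 2 + y * z + z ^ 2) - E * (y ^ 4 + y ^ 3 * z + y ^ 2 * z ^ 2 + y * z ^ 3 + z ^ 4))
      (K * (y + z) - E * (y ^ 3 + y ^ 2 * z + y * z ^ 2 + z ^ 3))
      (K - E * (y ^ 2 + y * z + z ^ 2)) (- E * (y + z)) (-E) (9 * l - 5 + l * t ^ 2) (by
        intro x hx
        refine le_of_eq_of_le ?_ (kernel_bound l hl t η _ x y z hη hc hx hy hz)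
        congr 1
        rw [hK, hE]
        ring)
    rw [← hP1, ← hP2, ← hP3, ← hP4] at this
    refine le_of_eq_of_le ?_ this
    congr 1
    ring
  have s2 : ∀ z : ℂ, ‖z‖ = 1 →
      (K * (P2 + P1 * (a1 + z) + (a2 + a1 * z + z ^ 2))
      - E * (P4 + P3 * (a1 + z) + P2 * (a2 + a1 * z + z ^ 2)
        + P1 * (a3 + a2 * z + a1 * z ^ 2 + z ^ 3)
        + (a4 + a3 * z + a2 * z ^ 2 + a1 * z ^ 3 + z ^ 4))).re
        ≤ 9 * l - 5 + l * t ^ 2 := by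
    intro z hz
    have := herglotz_half h hh h0 hhre
      (K * (P2 + P1 * z + z ^ 2) - E * (P4 + P3 * z + P2 * z ^ 2 + P1 * z ^ 3 + z ^ 4))
      (K * (P1 + z) - E * (P3 + P2 * z + P1 * z ^ 2 + z ^ 3))
      (K - E * (P2 + P1 * z + z ^ 2)) (- E * (P1 + z)) (-E) (9 * l - 5 + l * t ^ 2) (by
        intro y hy
        refine le_of_eq_of_le ?_ (s1 y z hy hz)
        congr 1
        ring)
    rw [← ha1, ← ha2, ← ha3, ← ha4] at this
    refine le_of_eq_of_le ?_ this
    congr 1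
    ring
  have := herglotz_half h hh h0 hhre
      (K * (P2 + P1 * a1 + a2) - E * (P4 + P3 * a1 + P2 * a2 + P1 * a3 + a4))
      (K * (P1 + a1) - E * (P3 + P2 * a1 + P1 * a2 + a3))
      (K - E * (P2 + P1 * a1 + a2)) (- E * (P1 + a1)) (-E) (9 * l - 5 + l * t ^ 2) (by
        intro z hz
        refine le_of_eq_of_le ?_ (s2 z hz)
        congr 1
        ring)
  rw [← ha1, ← ha2, ← ha3, ← ha4] at this
  refine le_of_eq_of_le ?_ this
  congr 1
  ring

theorem generalized_zalcman_closeToConvex_n3_large_lambda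
    (lam : ℝ) (hlam : (9 + Real.sqrt 33) / 12 ≤ lam)
    (f : ℂ → ℂ) (hf : IsCloseToConvex f) :
    ‖(lam : ℂ) * (taylorCoeff f 3) ^ 2 - taylorCoeff f 5‖ ≤ 9 * lam - 5 := by
  obtain ⟨hfd, hf0, hf1, θ, g, hg, hfg⟩ := hf
  obtain ⟨h, hh, h0, hgh, hne, hhre⟩ := marx g hg
  have h0mem : (0 : ℂ) ∈ ball (0 : ℂ) 1 := by simp
  set p : ℂ → ℂ := fun z => deriv f z / (h z) ^ 2 with hpdef
  have hp : DifferentiableOn ℂ p (ball 0 1) :=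
    (hfd.deriv isOpen_ball).div (hh.pow 2) (fun z hz => pow_ne_zero 2 (hne z hz))
  have hp0 : p 0 = 1 := by simp [hpdef, hf1, h0]
  have hpre : ∀ z ∈ ball (0 : ℂ) 1, z ≠ 0 → 0 < (Complex.exp (θ * I) * p z).re := by
    intro z hz hz0
    have h1 := hfg z ⟨hz, hz0⟩
    have h2 := hne z hz
    have h3 : Complex.exp (θ * I) * z * deriv f z / g z = Complex.exp (θ * I) * p z := by
      rw [hgh z hz]
      simp only [hpdef]
      field_simp
    rwa [h3] at h1
  have hcos := cos_pos_of p hp hp0 θ hpre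
  have hre : ∀ z ∈ ball (0 : ℂ) 1, 0 ≤ (Complex.exp (θ * I) * p z).re := by
    intro z hz
    by_cases hz0 : z = 0
    · rw [hz0, hp0, mul_one, Complex.exp_ofReal_mul_I_re]; exact hcos.le
    · exact (hpre z hz hz0).le
  have hpa : AnalyticAt ℂ p 0 := hp.analyticAt (ball_mem_nhds _ one_pos)
  have hha : AnalyticAt ℂ h 0 := hh.analyticAt (ball_mem_nhds _ one_pos)
  have hev : deriv f =ᶠ[nhds 0] fun z => p z * (h z * h z) := by
    filter_upwards [ball_mem_nhds (0 : ℂ) one_pos] with z hz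
    have h2 := hne z hz
    simp only [hpdef]
    field_simp
  have hT : ∀ n, taylorCoeff (deriv f) n = ∑ i ∈ Finset.range (n + 1),
      taylorCoeff p i * ∑ j ∈ Finset.range (n - i + 1), taylorCoeff h j
        * taylorCoeff h (n - i - j) := by
    intro n
    have e : taylorCoeff (deriv f) n = taylorCoeff (fun z => p z * (h z * h z)) n := by
      unfold taylorCoeff
      rw [hev.iteratedDeriv_eq]
    rw [e, taylorCoeff_mul p (fun z => h z * h z) hpa (hha.mul hha)]
    refine Finset.sum_congr rfl fun i _ => ?_
    rw [taylorCoeff_mul h h hha hha]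
  have tp0 : taylorCoeff p 0 = 1 := by simp [taylorCoeff, hp0]
  have th0 : taylorCoeff h 0 = 1 := by simp [taylorCoeff, h0]
  have hA3 := taylorCoeff_deriv f 2
  have hA5 := taylorCoeff_deriv f 4
  rw [hT] at hA3 hA5
  simp only [Finset.sum_range_succ, Finset.sum_range_zero, tp0, th0] at hA3 hA5
  norm_num [tp0, th0] at hA3 hA5
  have hl0 : 0 ≤ lam := by
    have := Real.sqrt_nonneg 33
    linarith
  have key : ∀ (t : ℝ) (η : ℂ), ‖η‖ = 1 →
      (2 * lam * t * (η ^ 2 * taylorCoeff f 3) - η ^ 4 * taylorCoeff f 5).re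
        ≤ 9 * lam - 5 + lam * t ^ 2 := by
    intro t η hη
    have := functional_bound lam hlam t η hη p h hp hp0 θ hcos hre hh h0 hhre
      _ _ _ _ _ _ _ _ rfl rfl rfl rfl rfl rfl rfl rfl
    refine le_of_eq_of_le ?_ this
    congr 1
    linear_combination (2 * lam * t / 3 * η ^ 2) * hA3 - (η ^ 4 / 5) * hA5
  set X := (lam : ℂ) * (taylorCoeff f 3) ^ 2 - taylorCoeff f 5 with hX
  set η : ℂ := Complex.exp (((-(Complex.arg X) / 4 : ℝ) : ℂ) * I) with hηd
  have hη : ‖η‖ = 1 := Complex.norm_exp_ofReal_mul_I _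
  have hη4 : η ^ 4 * X = (‖X‖ : ℂ) := by
    have e1 : η ^ 4 = Complex.exp (-(Complex.arg X * I)) := by
      rw [hηd, ← Complex.exp_nat_mul]
      congr 1
      push_cast
      ring
    have e2 := Complex.norm_mul_exp_arg_mul_I X
    rw [e1]
    nth_rewrite 2 [← e2]
    rw [mul_left_comm, ← Complex.exp_add, neg_add_cancel, Complex.exp_zero, mul_one]
  have hk := key ((η ^ 2 * taylorCoeff f 3).re) η hη
  set w := η ^ 2 * taylorCoeff f 3 with hw
  have hn : ‖X‖ = ((lam : ℂ) * w ^ 2 - η ^ 4 * taylorCoeff f 5).re := by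
    have : (lam : ℂ) * w ^ 2 - η ^ 4 * taylorCoeff f 5 = (‖X‖ : ℂ) := by
      rw [← hη4, hX, hw]; ring
    rw [this, Complex.ofReal_re]
  have e3 : ((2 : ℂ) * lam * (w.re : ℂ) * w).re = 2 * lam * w.re * w.re := by
    rw [show (2 : ℂ) * lam * (w.re : ℂ) = ((2 * lam * w.re : ℝ) : ℂ) by push_cast; ring,
      Complex.re_ofReal_mul]
  have e4 : ((lam : ℂ) * w ^ 2).re = lam * (w.re ^ 2 - w.im ^ 2) := by
    rw [Complex.re_ofReal_mul, sq, Complex.mul_re]; ring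
  rw [Complex.sub_re, e3] at hk
  rw [hn, Complex.sub_re, e4]
  nlinarith [mul_nonneg hl0 (sq_nonneg w.im)]
end

section
/- Let λ be a real number with 6/7 < λ < (9 + √33)/12. If f is a close-to-convex function on the unit disk with Taylor coefficients a_k, then |λ a_3² − a_5| ≤ (λ(12 − 7λ) + 3(2 − λ)√(3λ(2 − λ))) / (λ(6 − 4λ)). -/
open Complex Metric

lemma key_form (lam a B c : ℝ) (ha : 0 < a) (hB : a * B = 1) (hl : 0 < lam) (hl2 : 0 < 6 - 4 * lam)
    (hrel : (6 - 4 * lam) * B - lam * a = 2 * lam) (u v : ℂ) (hu : ‖u‖ ≤ 1) (hv : ‖v‖ ≤ 1) :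
    2 * lam * c * (2 * u - v).re - (3 * u ^ 2 - 2 * u * v).re ≤ 3 + a + B + lam * c ^ 2 := by
  have hu2 : u.re ^ 2 + u.im ^ 2 ≤ 1 := by
    have := Complex.sq_norm u
    rw [Complex.normSq_apply] at this
    nlinarith [norm_nonneg u]
  have hv2 : v.re ^ 2 + v.im ^ 2 ≤ 1 := by
    have := Complex.sq_norm v
    rw [Complex.normSq_apply] at this
    nlinarith [norm_nonneg v]
  have e1 : (2 * u - v).re = 2 * u.re - v.re := by simp
  have e2 : (3 * u ^ 2 - 2 * u * v).re
      = 3 * (u.re ^ 2 - u.im ^ 2) - 2 * (u.re * v.re - u.im * v.im) := by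
    simp [pow_two]; ring
  rw [e1, e2]
  generalize u.re = p at *
  generalize u.im = s at *
  generalize v.re = q at *
  generalize v.im = t at *
  have hBpos : 0 < B := by
    by_contra h
    have : a * B ≤ 0 := mul_nonpos_of_nonneg_of_nonpos ha.le (not_lt.mp h)
    linarith
  have f1 : 0 ≤ a * s ^ 2 + 2 * s * t + B * t ^ 2 := by
    have : 0 ≤ a * (a * s ^ 2 + 2 * s * t + B * t ^ 2) := by
      have : a * (a * s ^ 2 + 2 * s * t + B * t ^ 2) = (a * s + t) ^ 2 := by
        linear_combination t ^ 2 * hB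
      rw [this]; positivity
    exact nonneg_of_mul_nonneg_right this ha
  have f2 : 0 ≤ (a + 6 - 4 * lam) * p ^ 2 + (B - lam) * q ^ 2 - (2 - 4 * lam) * p * q := by
    have hD : 0 < a + 6 - 4 * lam := by linarith
    have : 0 ≤ (a + 6 - 4 * lam) * ((a + 6 - 4 * lam) * p ^ 2 + (B - lam) * q ^ 2 - (2 - 4 * lam) * p * q) := by
      have : (a + 6 - 4 * lam) * ((a + 6 - 4 * lam) * p ^ 2 + (B - lam) * q ^ 2 - (2 - 4 * lam) * p * q)
         = ((a + 6 - 4 * lam) * p - (1 - 2 * lam) * q) ^ 2 := by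
        linear_combination q ^ 2 * hB + q ^ 2 * hrel
      rw [this]; positivity
    exact nonneg_of_mul_nonneg_right this hD
  nlinarith [mul_nonneg (by linarith : 0 ≤ 3 + a) (sub_nonneg.2 hu2),
    mul_nonneg hBpos.le (sub_nonneg.2 hv2), mul_nonneg hl.le (sq_nonneg (2 * p - q - c))]

/-- The extremal value of the functional on products of three Cauchy kernels. -/
lemma kernel_bound_s7 (lam a B c : ℝ) (ha : 0 < a) (hB : a * B = 1) (hl : 0 < lam)
    (hl2 : 0 < 6 - 4 * lam) (hrel : (6 - 4 * lam) * B - lam * a = 2 * lam)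
    (ζ x y w d : ℂ) (hζ : ‖ζ‖ ≤ 1) (hx : ‖x‖ ≤ 1) (hy : ‖y‖ ≤ 1) (hw : ‖w‖ ≤ 1) (hd : ‖d‖ ≤ 1) :
    (2 * lam * c * ζ ^ 2 / 3 * ((x ^ 2 + y ^ 2 + w ^ 2 + x * y + x * w + y * w)
        + d * w * (x + y + w))
      - ζ ^ 4 / 5 * ((x ^ 4 + y ^ 4 + w ^ 4 + x ^ 3 * y + x ^ 3 * w + y ^ 3 * x + y ^ 3 * w
          + w ^ 3 * x + w ^ 3 * y + x ^ 2 * y ^ 2 + x ^ 2 * w ^ 2 + y ^ 2 * w ^ 2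
          + x ^ 2 * y * w + y ^ 2 * x * w + w ^ 2 * x * y)
        + d * w * (x ^ 3 + y ^ 3 + w ^ 3 + x ^ 2 * y + x ^ 2 * w + y ^ 2 * x + y ^ 2 * w
          + w ^ 2 * x + w ^ 2 * y + x * y * w)) : ℂ).re
      ≤ 3 + a + B + lam * c ^ 2 := by
  have main : ∀ W : ℂ, ‖W‖ ≤ 1 →
      (2 * lam * c * ζ ^ 2 * (2 * W ^ 2 + d * w * W) - ζ ^ 4 * (3 * W ^ 4 + 2 * (d * w) * W ^ 3) : ℂ).re
        ≤ 3 + a + B + lam * c ^ 2 := by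
    intro W hW
    have hu : ‖ζ ^ 2 * W ^ 2‖ ≤ 1 := by
      rw [norm_mul, norm_pow, norm_pow]
      exact mul_le_one₀ (pow_le_one₀ (norm_nonneg _) hζ) (by positivity) (pow_le_one₀ (norm_nonneg _) hW)
    have hv : ‖-(ζ ^ 2 * (d * w * W))‖ ≤ 1 := by
      rw [norm_neg, norm_mul, norm_pow, norm_mul, norm_mul]
      exact mul_le_one₀ (pow_le_one₀ (norm_nonneg _) hζ) (by positivity)
        (mul_le_one₀ (mul_le_one₀ hd (norm_nonneg _) hw) (norm_nonneg _) hW)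
    have := key_form lam a B c ha hB hl hl2 hrel _ _ hu hv
    convert this using 1
    rw [← Complex.re_ofReal_mul, ← Complex.sub_re]
    congr 1
    push_cast
    ring
  have hn : ∀ (α β γ : ℝ), 0 ≤ α → 0 ≤ β → 0 ≤ γ → α + β + γ = 1 →
      ‖(α : ℂ) * x + β * y + γ * w‖ ≤ 1 := by
    intro α β γ h1 h2 h3 h
    calc ‖(α : ℂ) * x + β * y + γ * w‖ ≤ ‖(α : ℂ) * x‖ + ‖(β : ℂ) * y‖ + ‖(γ : ℂ) * w‖ := norm_add₃_le
      _ = α * ‖x‖ + β * ‖y‖ + γ * ‖w‖ := by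
        simp [abs_of_nonneg, h1, h2, h3]
      _ ≤ α * 1 + β * 1 + γ * 1 := by gcongr
      _ = 1 := by linarith
  have m1 := main _ (hn (1/2) (1/2) 0 (by norm_num) (by norm_num) (by norm_num) (by norm_num))
  have m2 := main _ (hn (1/2) 0 (1/2) (by norm_num) (by norm_num) (by norm_num) (by norm_num))
  have m3 := main _ (hn 0 (1/2) (1/2) (by norm_num) (by norm_num) (by norm_num) (by norm_num))
  have m4 := main _ (hn (1/3) (1/3) (1/3) (by norm_num) (by norm_num) (by norm_num) (by norm_num))
  have m5 := main _ (hn (7/9) (1/9) (1/9) (by norm_num) (by norm_num) (by norm_num) (by norm_num))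
  have m6 := main _ (hn (1/9) (7/9) (1/9) (by norm_num) (by norm_num) (by norm_num) (by norm_num))
  have m7 := main _ (hn (1/9) (1/9) (7/9) (by norm_num) (by norm_num) (by norm_num) (by norm_num))
  generalize hM : 3 + a + B + lam * c ^ 2 = M at *
  have hs : ∀ X1 X2 X3 X4 X5 X6 X7 : ℂ, X1.re ≤ M → X2.re ≤ M → X3.re ≤ M → X4.re ≤ M →
      X5.re ≤ M → X6.re ≤ M → X7.re ≤ M →
      (((8/105 : ℝ) : ℂ) * (X1 + X2 + X3) + ((27/80 : ℝ) : ℂ) * X4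
        + ((81/560 : ℝ) : ℂ) * (X5 + X6 + X7)).re ≤ M := by
    intros
    simp only [Complex.add_re, Complex.re_ofReal_mul]
    linarith
  refine le_of_eq_of_le ?_ (hs _ _ _ _ _ _ _ m1 m2 m3 m4 m5 m6 m7)
  congr 1
  push_cast
  ring

lemma cauchy_coeff (q : ℂ → ℂ) (hq : DifferentiableOn ℂ q (ball (0 : ℂ) 1)) (r : ℝ) (hr0 : 0 < r)
    (hr1 : r < 1) (n : ℕ) :
    Real.circleAverage (fun z => q z * (r / z) ^ n) 0 r = taylorCoeff q n * r ^ n := by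
  have hsub : closedBall (0 : ℂ) r ⊆ ball 0 1 := closedBall_subset_ball hr1
  have h := (hq.mono hsub).circleIntegral_one_div_sub_center_pow_smul hr0 n
  rw [Real.circleAverage_eq_circleIntegral hr0.ne']
  have h2 : (∮ z in C((0 : ℂ), r), (z - 0)⁻¹ • (q z * (r / z) ^ n))
      = (r : ℂ) ^ n * ∮ z in C((0 : ℂ), r), (1 / (z - 0) ^ (n + 1)) • q z := by
    rw [← circleIntegral.integral_const_mul]
    apply circleIntegral.integral_congr hr0.le
    intro z hz
    have hz0 : z ≠ 0 := by
      rintro rfl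
      simp at hz
      exact hr0.ne hz
    simp only [sub_zero, smul_eq_mul, div_pow]
    field_simp
    ring
  rw [h2, h, taylorCoeff]
  have hpi : (2 * Real.pi * I : ℂ) ≠ 0 := by simp [Real.pi_ne_zero]
  have hf : ((n.factorial : ℕ) : ℂ) ≠ 0 := by exact_mod_cast n.factorial_ne_zero
  simp only [smul_eq_mul]
  field_simp

lemma carath_r (q : ℂ → ℂ) (hq : DifferentiableOn ℂ q (ball (0 : ℂ) 1))
    (hre : ∀ z ∈ ball (0 : ℂ) 1, 0 ≤ (q z).re) (α : ℕ → ℂ) (K : ℝ)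
    (hK : ∀ x : ℂ, ‖x‖ = 1 → 2 * (∑ n ∈ Finset.Icc 1 4, α n * x ^ n).re ≤ K)
    (r : ℝ) (hr0 : 0 < r) (hr1 : r < 1) :
    (∑ n ∈ Finset.Icc 1 4, α n * (taylorCoeff q n * r ^ n)).re ≤ K * (q 0).re := by
  have hsub : closedBall (0 : ℂ) r ⊆ ball 0 1 := closedBall_subset_ball hr1
  have hsub' : sphere (0 : ℂ) r ⊆ ball 0 1 := sphere_subset_closedBall.trans hsub
  have hqc : ContinuousOn q (sphere (0 : ℂ) r) := hq.continuousOn.mono hsub'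
  have hne : ∀ z ∈ sphere (0 : ℂ) r, z ≠ 0 := by
    rintro z hz rfl
    simp at hz
    exact hr0.ne hz
  have hrc : (r : ℂ) ≠ 0 := by exact_mod_cast hr0.ne'
  set Φ : ℂ → ℂ := fun z => q z * (K - ∑ n ∈ Finset.Icc 1 4, (starRingEnd ℂ) (α n) * (z / r) ^ n)
    with hΦ
  have hΦd : DifferentiableOn ℂ Φ (ball (0 : ℂ) 1) := by
    apply hq.mul
    fun_prop
  have avΦ : Real.circleAverage Φ 0 r = K * q 0 := by
    have : DiffContOnCl ℂ Φ (ball 0 |r|) := by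
      rw [abs_of_pos hr0]
      exact (hΦd.mono (closure_ball_subset_closedBall.trans hsub)).diffContOnCl
    rw [this.circleAverage]
    simp only [hΦ]
    rw [Finset.sum_eq_zero]
    · ring
    · intro n hn
      rw [Finset.mem_Icc] at hn
      simp [show n ≠ 0 by omega]
  set Θ : ℕ → ℂ → ℂ := fun n z => α n * (q z * (r / z) ^ n) with hΘ
  have hΘc : ∀ n, ContinuousOn (Θ n) (sphere (0 : ℂ) r) := by
    intro n
    apply ContinuousOn.mul continuousOn_const
    apply hqc.mul
    apply ContinuousOn.pow
    exact continuousOn_const.div continuousOn_id hne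
  have hΘi : ∀ n, CircleIntegrable (Θ n) 0 r := fun n => (hΘc n).circleIntegrable hr0.le
  have avΘ : ∀ n, Real.circleAverage (Θ n) 0 r = α n * (taylorCoeff q n * r ^ n) := by
    intro n
    rw [← cauchy_coeff q hq r hr0 hr1 n]
    exact Real.circleAverage_fun_smul (a := α n) (f := fun z => q z * (r / z) ^ n)
  have hΦi : CircleIntegrable Φ 0 r := (hΦd.continuousOn.mono hsub').circleIntegrable hr0.le
  have hSi : CircleIntegrable (fun z => ∑ n ∈ Finset.Icc 1 4, Θ n z) 0 r := by
    apply ContinuousOn.circleIntegrable hr0.le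
    exact continuousOn_finsetSum _ (fun n _ => hΘc n)
  have avT : Real.circleAverage (fun z => Φ z - ∑ n ∈ Finset.Icc 1 4, Θ n z) 0 r
      = K * q 0 - ∑ n ∈ Finset.Icc 1 4, α n * (taylorCoeff q n * r ^ n) := by
    rw [Real.circleAverage_fun_sub hΦi hSi, avΦ, Real.circleAverage_fun_sum (fun n _ => hΘi n)]
    simp only [avΘ]
  have hcomm := Complex.reCLM.circleAverage_comp_comm (hΦi.sub hSi)
  have hnn : 0 ≤ Real.circleAverage (Complex.reCLM ∘ (Φ - fun z => ∑ n ∈ Finset.Icc 1 4, Θ n z)) 0 r := by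
    apply Real.circleAverage_nonneg_of_nonneg
    intro z hz
    rw [abs_of_pos hr0] at hz
    have hz0 := hne z hz
    have hzn : ‖z‖ = r := by simpa using hz
    have hx : ‖(r : ℂ) / z‖ = 1 := by
      rw [norm_div, hzn]; simp [abs_of_pos hr0, hr0.ne']
    have hconj : (starRingEnd ℂ) ((r : ℂ) / z) = z / r := by
      rw [map_div₀, Complex.conj_ofReal, div_eq_div_iff (by simpa using hz0) hrc, Complex.mul_conj,
        Complex.normSq_eq_norm_sq, hzn]
      push_cast; ring
    have hk := hK _ hx
    have hS : (starRingEnd ℂ) (∑ n ∈ Finset.Icc 1 4, α n * ((r : ℂ) / z) ^ n)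
        = ∑ n ∈ Finset.Icc 1 4, (starRingEnd ℂ) (α n) * (z / r) ^ n := by
      rw [map_sum]
      simp only [map_mul, map_pow, hconj]
    have e : (Φ - fun z => ∑ n ∈ Finset.Icc 1 4, Θ n z) z
        = q z * ((K - 2 * (∑ n ∈ Finset.Icc 1 4, α n * ((r : ℂ) / z) ^ n).re : ℝ) : ℂ) := by
      simp only [Pi.sub_apply, hΦ, hΘ]
      rw [← hS]
      have : ∑ n ∈ Finset.Icc 1 4, α n * (q z * ((r : ℂ) / z) ^ n)
          = q z * ∑ n ∈ Finset.Icc 1 4, α n * ((r : ℂ) / z) ^ n := by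
        rw [Finset.mul_sum]
        exact Finset.sum_congr rfl (fun _ _ => by ring)
      rw [this]
      have h2 := Complex.add_conj (∑ n ∈ Finset.Icc 1 4, α n * ((r : ℂ) / z) ^ n)
      push_cast at h2 ⊢
      linear_combination (-q z) * h2
    simp only [Function.comp, Complex.reCLM_apply]
    rw [e, Complex.re_mul_ofReal]
    exact mul_nonneg (hre z (hsub' hz)) (by linarith)
  rw [hcomm] at hnn
  change 0 ≤ Complex.re (Real.circleAverage (fun z => Φ z - ∑ n ∈ Finset.Icc 1 4, Θ n z) 0 r) at hnn
  rw [avT, Complex.sub_re, Complex.re_ofReal_mul] at hnn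
  linarith

lemma carath (q : ℂ → ℂ) (hq : DifferentiableOn ℂ q (ball (0 : ℂ) 1))
    (hre : ∀ z ∈ ball (0 : ℂ) 1, 0 ≤ (q z).re) (α : ℕ → ℂ) (K : ℝ)
    (hK : ∀ x : ℂ, ‖x‖ = 1 → 2 * (∑ n ∈ Finset.Icc 1 4, α n * x ^ n).re ≤ K) :
    (∑ n ∈ Finset.Icc 1 4, α n * taylorCoeff q n).re ≤ K * (q 0).re := by
  have hc : Continuous (fun r : ℝ => (∑ n ∈ Finset.Icc 1 4, α n * (taylorCoeff q n * (r : ℂ) ^ n)).re) := by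
    fun_prop
  have ht : Filter.Tendsto (fun r : ℝ => (∑ n ∈ Finset.Icc 1 4, α n * (taylorCoeff q n * (r : ℂ) ^ n)).re)
      (nhdsWithin 1 (Set.Iio 1)) (nhds (∑ n ∈ Finset.Icc 1 4, α n * (taylorCoeff q n * ((1 : ℝ) : ℂ) ^ n)).re) :=
    (hc.tendsto 1).mono_left nhdsWithin_le_nhds
  simp only [Complex.ofReal_one, one_pow, mul_one] at ht
  apply le_of_tendsto ht
  have : Set.Ioo (0 : ℝ) 1 ∈ nhdsWithin 1 (Set.Iio 1) := Ioo_mem_nhdsLT (by norm_num)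
  filter_upwards [this] with r hr
  exact carath_r q hq hre α K hK r hr.1 hr.2

lemma deriv_nonneg_of_max_right (ψ : ℝ → ℝ) (d : ℝ) (hd : HasDerivAt ψ d 1)
    (h : ∀ t, 0 < t → t < 1 → ψ t ≤ ψ 1) : 0 ≤ d := by
  have h1 := (hasDerivAt_iff_tendsto_slope.1 hd).mono_left
    (nhdsWithin_mono 1 (fun x (hx : x < 1) => hx.ne) : nhdsWithin (1:ℝ) (Set.Iio 1) ≤ _)
  apply ge_of_tendsto h1
  have : Set.Ioo (0 : ℝ) 1 ∈ nhdsWithin 1 (Set.Iio 1) := Ioo_mem_nhdsLT (by norm_num)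
  filter_upwards [this] with t ht
  rw [slope_def_field]
  exact div_nonneg_of_nonpos (by linarith [h t ht.1 ht.2]) (by linarith [ht.2])

lemma jack_s7 (ω : ℂ → ℂ) (hd : DifferentiableOn ℂ ω (ball (0 : ℂ) 1)) (h0 : ω 0 = 0)
    (hno : ∀ z ∈ ball (0 : ℂ) 1, z ≠ 0 → ‖ω z‖ = 1 → ∀ k : ℝ, 1 ≤ k → z * deriv ω z ≠ k * ω z) :
    ∀ z ∈ ball (0 : ℂ) 1, ‖ω z‖ < 1 := by
  intro z1 hz1
  by_contra hcon
  push Not at hcon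
  have hz1n : ‖z1‖ < 1 := by simpa using hz1
  have hsub1 : closedBall (0 : ℂ) ‖z1‖ ⊆ ball 0 1 := closedBall_subset_ball hz1n
  have hcont : ContinuousOn (fun z => ‖ω z‖) (closedBall (0 : ℂ) ‖z1‖) :=
    (hd.continuousOn.mono hsub1).norm
  have hcl : IsClosed (closedBall (0 : ℂ) ‖z1‖ ∩ (fun z => ‖ω z‖) ⁻¹' Set.Ici 1) :=
    hcont.preimage_isClosed_of_isClosed isClosed_closedBall isClosed_Ici
  have hcomp : IsCompact (closedBall (0 : ℂ) ‖z1‖ ∩ (fun z => ‖ω z‖) ⁻¹' Set.Ici 1) :=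
    (isCompact_closedBall (0 : ℂ) ‖z1‖).of_isClosed_subset hcl Set.inter_subset_left
  obtain ⟨z0, hz0, hmin⟩ := hcomp.exists_isMinOn ⟨z1, by simp, hcon⟩ continuous_norm.continuousOn
  have hz0b : z0 ∈ ball (0 : ℂ) 1 := hsub1 hz0.1
  have hz0n : ‖z0‖ < 1 := by simpa using hz0b
  have hge : 1 ≤ ‖ω z0‖ := hz0.2
  have hz0ne : z0 ≠ 0 := by
    rintro rfl
    rw [h0] at hge
    norm_num at hge
  have hr : 0 < ‖z0‖ := norm_pos_iff.2 hz0ne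
  have hlt : ∀ z, ‖z‖ < ‖z0‖ → ‖ω z‖ < 1 := by
    intro z hz
    by_contra hh
    push Not at hh
    have hzz : ‖z0‖ ≤ ‖z1‖ := by simpa using hz0.1
    have := hmin (a := z) ⟨by simpa using (hz.le.trans hzz), hh⟩
    simp only [Set.mem_ofPred_eq] at this
    linarith
  have hsub0 : closedBall (0 : ℂ) ‖z0‖ ⊆ ball 0 1 := closedBall_subset_ball hz0n
  have hschw : ∀ z ∈ ball (0 : ℂ) ‖z0‖, ‖ω z‖ ≤ 1 / ‖z0‖ * ‖z‖ := by
    intro z hz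
    have := Complex.dist_le_div_mul_dist_of_mapsTo_ball (R₂ := 1)
      (hd.mono (ball_subset_closedBall.trans hsub0)) (fun w hw => by
        rw [h0]
        simpa using (hlt w (by simpa using hw)).le) hz
    simpa [h0] using this
  have hschw' : ∀ z ∈ closedBall (0 : ℂ) ‖z0‖, ‖ω z‖ ≤ 1 / ‖z0‖ * ‖z‖ := by
    intro z hz
    rw [← closure_ball (0 : ℂ) hr.ne'] at hz
    refine le_on_closure hschw ?_ ?_ hz
    · rw [closure_ball (0 : ℂ) hr.ne']
      exact (hd.continuousOn.mono hsub0).norm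
    · fun_prop
  have h1 : ‖ω z0‖ = 1 := by
    apply le_antisymm _ hge
    have := hschw' z0 (by simp)
    rwa [one_div, inv_mul_cancel₀ hr.ne'] at this
  have hω : HasDerivAt ω (deriv ω z0) z0 :=
    (hd.differentiableAt (isOpen_ball.mem_nhds hz0b)).hasDerivAt
  -- radial derivative
  have hrad : HasDerivAt (fun t : ℝ => ω ((t : ℂ) * z0)) (deriv ω z0 * z0) 1 := by
    have hc : HasDerivAt (fun t : ℝ => (t : ℂ) * z0) (1 * z0) 1 :=
      (Complex.ofRealCLM.hasDerivAt (x := (1:ℝ))).mul_const z0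
    have hω' : HasDerivAt ω (deriv ω z0) (((1 : ℝ) : ℂ) * z0) := by simpa using hω
    have hcomp := hω'.comp (1 : ℝ) hc
    rw [one_mul] at hcomp
    exact hcomp
  have hrad2 := (hrad.norm_sq).sub (hasDerivAt_pow 2 (1 : ℝ))
  have hradnn := deriv_nonneg_of_max_right _ _ hrad2 (by
    intro t ht0 ht1
    have hb : ‖(t : ℂ) * z0‖ = t * ‖z0‖ := by simp [abs_of_pos ht0]
    have := hschw' (↑t * z0) (by
      rw [mem_closedBall_zero_iff, hb]
      nlinarith)
    rw [hb] at this
    have h3 : 1 / ‖z0‖ * (t * ‖z0‖) = t := by field_simp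
    rw [h3] at this
    simp only [Pi.sub_apply, Pi.pow_apply, Complex.ofReal_one, one_mul, h1]
    nlinarith [norm_nonneg (ω (↑t * z0))])
  -- tangential derivative
  have htan : HasDerivAt (fun t : ℝ => ω (z0 * Complex.exp (t * I))) (deriv ω z0 * (z0 * I)) 0 := by
    have hc0 : HasDerivAt (fun t : ℝ => (t : ℂ) * I) (1 * I) 0 :=
      (Complex.ofRealCLM.hasDerivAt (x := (0:ℝ))).mul_const I
    have hc : HasDerivAt (fun t : ℝ => z0 * Complex.exp (t * I)) (z0 * I) 0 := by
      simpa using (hc0.cexp).const_mul z0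
    have hω' : HasDerivAt ω (deriv ω z0) (z0 * Complex.exp (((0 : ℝ) : ℂ) * I)) := by simpa using hω
    exact hω'.comp (0 : ℝ) hc
  have htan2 := htan.norm_sq
  have hmax : IsLocalMax (fun t : ℝ => ‖ω (z0 * Complex.exp (t * I))‖ ^ 2) 0 := by
    apply Filter.Eventually.of_forall
    intro t
    have hb : ‖z0 * Complex.exp (t * I)‖ = ‖z0‖ := by simp [Complex.norm_exp_ofReal_mul_I]
    have := hschw' (z0 * Complex.exp (t * I)) (by rw [mem_closedBall_zero_iff, hb])
    rw [hb, one_div, inv_mul_cancel₀ hr.ne'] at this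
    simp only [Complex.ofReal_zero, zero_mul, Complex.exp_zero, mul_one, h1]
    nlinarith [norm_nonneg (ω (z0 * Complex.exp (t * I)))]
  have htz := hmax.hasDerivAt_eq_zero htan2
  simp only [Complex.ofReal_zero, Complex.ofReal_one, zero_mul, Complex.exp_zero, mul_one, one_mul,
    Complex.inner] at htz hradnn
  set w : ℂ := deriv ω z0 * z0 * (starRingEnd ℂ) (ω z0) with hw
  have hre : 1 ≤ w.re := by
    norm_num at hradnn
    simp only [hw, Complex.mul_re, Complex.mul_im, Complex.conj_re, Complex.conj_im] at hradnn ⊢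
    linarith
  have him : w.im = 0 := by
    norm_num at htz
    simp only [hw, Complex.mul_re, Complex.mul_im, Complex.conj_re, Complex.conj_im, Complex.I_re,
      Complex.I_im] at htz ⊢
    linarith
  apply hno z0 hz0b hz0ne h1 w.re hre
  have hwr : ((w.re : ℝ) : ℂ) = w := Complex.ext (by simp) (by simp [him])
  rw [hwr, hw]
  have hcc : (starRingEnd ℂ) (ω z0) * ω z0 = 1 := by
    rw [mul_comm, Complex.mul_conj, Complex.normSq_eq_norm_sq, h1]; simp
  linear_combination (-(deriv ω z0 * z0)) * hcc

lemma starlike_sqrt (g : ℂ → ℂ) (hg : IsStarlikeFn g) :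
    ∃ l : ℂ → ℂ, DifferentiableOn ℂ l (ball (0 : ℂ) 1) ∧ l 0 = 0 ∧
      (∀ z ∈ ball (0 : ℂ) 1, g z = z * Complex.exp (l z) ^ 2) ∧
      ∀ z ∈ ball (0 : ℂ) 1, 1 / 2 < (Complex.exp (l z)).re := by
  obtain ⟨hgd, hg0, hg1, hgs⟩ := hg
  have h0m : (0 : ℂ) ∈ ball (0 : ℂ) 1 := by simp
  have hnhds : ball (0 : ℂ) 1 ∈ nhds (0 : ℂ) := isOpen_ball.mem_nhds h0m
  obtain ⟨G, hG⟩ : ∃ G, G = dslope g 0 := ⟨_, rfl⟩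
  have hGd : DifferentiableOn ℂ G (ball (0 : ℂ) 1) := by
    rw [hG]; exact (Complex.differentiableOn_dslope hnhds).2 hgd
  have hgG : ∀ z, g z = z * G z := by
    intro z
    have := sub_smul_dslope g 0 z
    simp only [sub_zero, hg0, smul_eq_mul] at this
    rw [hG, this]
  have hG0 : G 0 = 1 := by rw [hG, dslope_same, hg1]
  have hGne : ∀ z ∈ ball (0 : ℂ) 1, G z ≠ 0 := by
    intro z hz h
    by_cases hz0 : z = 0
    · rw [hz0, hG0] at h; exact one_ne_zero h
    · have := hgs z ⟨hz, hz0⟩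
      rw [hgG z, h] at this
      simp at this
  have hGd' : DifferentiableOn ℂ (deriv G) (ball (0 : ℂ) 1) := hGd.deriv isOpen_ball
  have hquot : DifferentiableOn ℂ (fun z => deriv G z / (2 * G z)) (ball (0 : ℂ) 1) :=
    hGd'.div (hGd.const_mul 2) (fun z hz => mul_ne_zero two_ne_zero (hGne z hz))
  obtain ⟨l, hl0, hl⟩ := hquot.isExactOn_ball.with_val_at 0 0
  have hGder : ∀ z ∈ ball (0 : ℂ) 1, HasDerivAt G (deriv G z) z := fun z hz =>
    (hGd.differentiableAt (isOpen_ball.mem_nhds hz)).hasDerivAt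
  have hconst : ∀ z ∈ ball (0 : ℂ) 1, HasDerivAt (fun z => Complex.exp (-2 * l z) * G z) 0 z := by
    intro z hz
    have h1 := (((hl z hz).const_mul (-2)).cexp).mul (hGder z hz)
    refine h1.congr_deriv ?_
    have := hGne z hz
    field_simp
    ring
  have hval : ∀ z ∈ ball (0 : ℂ) 1, Complex.exp (-2 * l z) * G z = 1 := by
    intro z hz
    have := IsOpen.is_const_of_deriv_eq_zero (f := fun z => Complex.exp (-2 * l z) * G z)
      isOpen_ball (convex_ball (0 : ℂ) 1).isPreconnected
      (fun z hz => (hconst z hz).differentiableAt.differentiableWithinAt)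
      (fun z hz => (hconst z hz).deriv) hz h0m
    simp only [hl0, hG0] at this
    simpa using this
  have hGl : ∀ z ∈ ball (0 : ℂ) 1, G z = Complex.exp (l z) ^ 2 := by
    intro z hz
    have h1 := hval z hz
    have h2 : Complex.exp (l z) ^ 2 * Complex.exp (-2 * l z) = 1 := by
      rw [← Complex.exp_nat_mul, ← Complex.exp_add]
      simp
    calc G z = (Complex.exp (l z) ^ 2 * Complex.exp (-2 * l z)) * G z := by rw [h2, one_mul]
      _ = Complex.exp (l z) ^ 2 * (Complex.exp (-2 * l z) * G z) := by ring
      _ = _ := by rw [h1, mul_one]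
  have hld : DifferentiableOn ℂ l (ball (0 : ℂ) 1) := fun z hz =>
    (hl z hz).differentiableAt.differentiableWithinAt
  refine ⟨l, hld, hl0, fun z hz => by rw [hgG z, hGl z hz], ?_⟩
  have hω : ∀ z ∈ ball (0 : ℂ) 1, HasDerivAt (fun z => 1 - Complex.exp (-l z))
      (Complex.exp (-l z) * (deriv G z / (2 * G z))) z := by
    intro z hz
    have := ((hl z hz).neg.cexp).const_sub 1
    refine this.congr_deriv ?_
    rw [Pi.neg_apply]
    ring
  have hj := jack_s7 (fun z => 1 - Complex.exp (-l z))
    (fun z hz => (hω z hz).differentiableAt.differentiableWithinAt) (by simp [hl0]) (by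
      intro z hz hz0 hn k hk heq
      rw [(hω z hz).deriv] at heq
      have hp := hgs z ⟨hz, hz0⟩
      have hgder : HasDerivAt g (1 * G z + z * deriv G z) z := by
        have := (hasDerivAt_id z).mul (hGder z hz)
        exact this.congr_of_eventuallyEq (Filter.Eventually.of_forall fun w => hgG w)
      rw [hgder.deriv, hgG z] at hp
      have hGz := hGne z hz
      set m : ℂ := z * (deriv G z / (2 * G z)) with hm
      have e1 : z * (1 * G z + z * deriv G z) / (z * G z) = 1 + 2 * m := by
        rw [hm]; field_simp
      rw [e1] at hp
      set h : ℂ := Complex.exp (-l z) with hh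
      have hne : h ≠ 0 := Complex.exp_ne_zero _
      have e2 : h * m = k * (1 - h) := by rw [← heq, hm]; ring
      have e3 : m = k / h - k := by
        field_simp
        linear_combination e2
      have hsq : Complex.normSq (1 - h) = 1 := by
        rw [Complex.normSq_eq_norm_sq, hn]; norm_num
      have hnp : 0 < Complex.normSq h := Complex.normSq_pos.2 hne
      rw [Complex.normSq_apply] at hsq hnp
      simp only [Complex.sub_re, Complex.sub_im, Complex.one_re, Complex.one_im] at hsq
      have e4 : (k / h : ℂ).re = k / 2 := by
        rw [Complex.div_re]
        simp only [Complex.ofReal_re, Complex.ofReal_im, Complex.normSq_apply]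
        have : h.re * h.re + h.im * h.im = 2 * h.re := by linarith
        rw [this] at hnp ⊢
        have : h.re ≠ 0 := by intro hc; rw [hc] at hnp; simp at hnp
        field_simp
        ring
      rw [e3] at hp
      have : (1 + 2 * ((k : ℂ) / h - k)).re = 1 + 2 * ((k / h : ℂ).re - k) := by simp
      rw [this, e4] at hp
      linarith)
  intro z hz
  have hn := hj z hz
  rw [Complex.exp_neg] at hn
  set F := Complex.exp (l z) with hF
  have hFne : F ≠ 0 := Complex.exp_ne_zero _
  have e : 1 - F⁻¹ = (F - 1) / F := by field_simp
  rw [e, norm_div, div_lt_one (norm_pos_iff.2 hFne)] at hn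
  have h2 : ‖F - 1‖ ^ 2 < ‖F‖ ^ 2 := by
    have := norm_nonneg (F - 1)
    nlinarith
  rw [← Complex.normSq_eq_norm_sq, ← Complex.normSq_eq_norm_sq, Complex.normSq_apply,
    Complex.normSq_apply] at h2
  simp only [Complex.sub_re, Complex.sub_im, Complex.one_re, Complex.one_im] at h2
  linarith

lemma contDiffAt_of_ball (φ : ℂ → ℂ) (hφ : DifferentiableOn ℂ φ (ball (0 : ℂ) 1)) (n : ℕ) :
    ContDiffAt ℂ n φ 0 :=
  (hφ.analyticAt (isOpen_ball.mem_nhds (by simp))).contDiffAt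

lemma taylor_mul (φ ψ : ℂ → ℂ) (hφ : DifferentiableOn ℂ φ (ball (0 : ℂ) 1))
    (hψ : DifferentiableOn ℂ ψ (ball (0 : ℂ) 1)) (n : ℕ) :
    taylorCoeff (fun z => φ z * ψ z) n
      = ∑ i ∈ Finset.range (n + 1), taylorCoeff φ i * taylorCoeff ψ (n - i) := by
  have h := iteratedDeriv_mul (contDiffAt_of_ball φ hφ n) (contDiffAt_of_ball ψ hψ n)
  change iteratedDeriv n (fun z => φ z * ψ z) 0 = _ at h
  unfold taylorCoeff
  rw [h, Finset.sum_div]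
  apply Finset.sum_congr rfl
  intro i hi
  have hi' : i ≤ n := by simpa [Nat.lt_succ_iff] using hi
  rw [Nat.cast_choose ℂ hi']
  have h1 : ((n.factorial : ℕ) : ℂ) ≠ 0 := by exact_mod_cast n.factorial_ne_zero
  have h2 : ((i.factorial : ℕ) : ℂ) ≠ 0 := by exact_mod_cast i.factorial_ne_zero
  have h3 : (((n - i).factorial : ℕ) : ℂ) ≠ 0 := by exact_mod_cast (n - i).factorial_ne_zero
  field_simp

lemma taylor_zero (φ : ℂ → ℂ) : taylorCoeff φ 0 = φ 0 := by simp [taylorCoeff]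

lemma taylor_sub_const (φ : ℂ → ℂ) (c : ℂ) (n : ℕ) :
    taylorCoeff (fun z => φ z - c) (n + 1) = taylorCoeff φ (n + 1) := by
  unfold taylorCoeff
  rw [iteratedDeriv_succ', iteratedDeriv_succ']
  congr 2
  funext z
  simp

lemma taylor_const_mul (φ : ℂ → ℂ) (c : ℂ) (n : ℕ) :
    taylorCoeff (fun z => c * φ z) n = c * taylorCoeff φ n := by
  unfold taylorCoeff
  rw [iteratedDeriv_const_mul_field]
  ring

lemma taylor_deriv (φ : ℂ → ℂ) (n : ℕ) :
    taylorCoeff (deriv φ) n = (n + 1) * taylorCoeff φ (n + 1) := by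
  unfold taylorCoeff
  rw [iteratedDeriv_succ', Nat.factorial_succ]
  have h1 : ((n.factorial : ℕ) : ℂ) ≠ 0 := by exact_mod_cast n.factorial_ne_zero
  have h2 : ((n : ℂ) + 1) ≠ 0 := by exact_mod_cast n.succ_ne_zero
  push_cast
  field_simp

lemma carath4 (q : ℂ → ℂ) (hq : DifferentiableOn ℂ q (ball (0 : ℂ) 1))
    (hre : ∀ z ∈ ball (0 : ℂ) 1, 0 ≤ (q z).re) (γ₁ γ₂ γ₃ γ₄ : ℂ) (K : ℝ)
    (hK : ∀ x : ℂ, ‖x‖ = 1 → 2 * (γ₁ * x + γ₂ * x ^ 2 + γ₃ * x ^ 3 + γ₄ * x ^ 4).re ≤ K) :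
    (γ₁ * taylorCoeff q 1 + γ₂ * taylorCoeff q 2 + γ₃ * taylorCoeff q 3
      + γ₄ * taylorCoeff q 4).re ≤ K * (q 0).re := by
  have h := carath q hq hre (fun n => match n with | 1 => γ₁ | 2 => γ₂ | 3 => γ₃ | _ => γ₄) K (by
    intro x hx
    have := hK x hx
    simpa [Finset.sum_Icc_succ_top] using this)
  simpa [Finset.sum_Icc_succ_top] using h

lemma lin_half (F : ℂ → ℂ) (hF : DifferentiableOn ℂ F (ball (0 : ℂ) 1)) (hF0 : F 0 = 1)
    (hre : ∀ z ∈ ball (0 : ℂ) 1, 1 / 2 < (F z).re) (γ₀ γ₁ γ₂ γ₃ γ₄ : ℂ) (K : ℝ)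
    (hK : ∀ x : ℂ, ‖x‖ = 1 → (γ₀ + (γ₁ * x + γ₂ * x ^ 2 + γ₃ * x ^ 3 + γ₄ * x ^ 4)).re ≤ K) :
    (γ₀ + (γ₁ * taylorCoeff F 1 + γ₂ * taylorCoeff F 2 + γ₃ * taylorCoeff F 3
      + γ₄ * taylorCoeff F 4)).re ≤ K := by
  have h := carath4 (fun z => F z - (1 / 2 : ℝ)) (hF.sub_const _) (fun z hz => by
    have := hre z hz
    rw [Complex.sub_re, Complex.ofReal_re]
    linarith) γ₁ γ₂ γ₃ γ₄ (2 * (K - γ₀.re)) (fun x hx => by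
      have := hK x hx
      rw [Complex.add_re] at this
      linarith)
  simp only [taylor_sub_const F _ 0, taylor_sub_const F _ 1, taylor_sub_const F _ 2,
    taylor_sub_const F _ 3, zero_add, Nat.reduceAdd] at h
  rw [Complex.sub_re, Complex.ofReal_re, hF0, Complex.one_re] at h
  rw [Complex.add_re]
  linarith

lemma lin_tilt (p : ℂ → ℂ) (hp : DifferentiableOn ℂ p (ball (0 : ℂ) 1)) (hp0 : p 0 = 1) (e : ℂ)
    (he : ‖e‖ = 1) (hre : ∀ z ∈ ball (0 : ℂ) 1, 0 ≤ (e * p z).re) (γ₀ γ₁ γ₂ γ₃ γ₄ : ℂ) (K : ℝ)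
    (hK : ∀ x : ℂ, ‖x‖ = 1 → (γ₀ + (1 + (starRingEnd ℂ) e ^ 2) *
      (γ₁ * x + γ₂ * x ^ 2 + γ₃ * x ^ 3 + γ₄ * x ^ 4)).re ≤ K) :
    (γ₀ + (γ₁ * taylorCoeff p 1 + γ₂ * taylorCoeff p 2 + γ₃ * taylorCoeff p 3
      + γ₄ * taylorCoeff p 4)).re ≤ K := by
  obtain ⟨e', he'⟩ : ∃ e', e' = (starRingEnd ℂ) e := ⟨_, rfl⟩
  rw [← he'] at hK
  have hee : e' * e = 1 := by
    rw [he', mul_comm, Complex.mul_conj, Complex.normSq_eq_norm_sq, he]; simp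
  have hsum : e + e' = 2 * e.re := by rw [he']; exact_mod_cast Complex.add_conj e
  have hd : 1 + e' ^ 2 = 2 * e.re * e' := by linear_combination (-1 : ℂ) * hee + e' * hsum
  have hc : 0 ≤ e.re := by simpa [hp0] using hre 0 (by simp)
  have key : ∀ K₁ : ℝ, (∀ x : ℂ, ‖x‖ = 1 →
      2 * (e' * γ₁ * x + e' * γ₂ * x ^ 2 + e' * γ₃ * x ^ 3 + e' * γ₄ * x ^ 4).re ≤ K₁) →
      (γ₁ * taylorCoeff p 1 + γ₂ * taylorCoeff p 2 + γ₃ * taylorCoeff p 3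
        + γ₄ * taylorCoeff p 4).re ≤ K₁ * e.re := by
    intro K₁ hK₁
    have h := carath4 (fun z => e * p z) (hp.const_mul e) hre (e' * γ₁) (e' * γ₂) (e' * γ₃)
      (e' * γ₄) K₁ hK₁
    simp only [taylor_const_mul, hp0, mul_one] at h
    convert h using 2
    linear_combination (-(γ₁ * taylorCoeff p 1 + γ₂ * taylorCoeff p 2 + γ₃ * taylorCoeff p 3
        + γ₄ * taylorCoeff p 4)) * hee
  rw [Complex.add_re]
  rcases hc.eq_or_lt with h0 | hpos
  · have hk := key (2 * (‖e' * γ₁‖ + ‖e' * γ₂‖ + ‖e' * γ₃‖ + ‖e' * γ₄‖)) (by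
      intro x hx
      gcongr
      refine (Complex.re_le_norm _).trans ((norm_add₄_le).trans (le_of_eq ?_))
      simp [hx])
    rw [← h0, mul_zero] at hk
    have h1 := hK 1 (by simp)
    rw [hd, ← h0] at h1
    simp at h1
    linarith
  · have hk := key ((K - γ₀.re) / e.re) (by
      intro x hx
      have h1 := hK x hx
      rw [hd] at h1
      rw [le_div_iff₀ hpos]
      have h2 : (2 * (e.re : ℂ) * e' * (γ₁ * x + γ₂ * x ^ 2 + γ₃ * x ^ 3 + γ₄ * x ^ 4)).re
          = 2 * (e' * γ₁ * x + e' * γ₂ * x ^ 2 + e' * γ₃ * x ^ 3 + e' * γ₄ * x ^ 4).re * e.re := by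
        have : 2 * (e.re : ℂ) * e' * (γ₁ * x + γ₂ * x ^ 2 + γ₃ * x ^ 3 + γ₄ * x ^ 4)
          = ((2 * e.re : ℝ) : ℂ) * (e' * γ₁ * x + e' * γ₂ * x ^ 2 + e' * γ₃ * x ^ 3 + e' * γ₄ * x ^ 4) := by
          push_cast; ring
        rw [this, Complex.re_ofReal_mul]; ring
      rw [Complex.add_re, h2] at h1
      linarith)
    rw [div_mul_cancel₀ _ hpos.ne'] at hk
    linarith

/-- Sharp estimate of the linearized functional on the close-to-convex family. -/
lemma linear_bound (lam a B c : ℝ) (ha : 0 < a) (hB : a * B = 1) (hl : 0 < lam)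
    (hl2 : 0 < 6 - 4 * lam) (hrel : (6 - 4 * lam) * B - lam * a = 2 * lam)
    (ζ : ℂ) (hζ : ‖ζ‖ ≤ 1) (f : ℂ → ℂ) (hf : IsCloseToConvex f) :
    (2 * lam * c * (ζ ^ 2 * taylorCoeff f 3) - ζ ^ 4 * taylorCoeff f 5).re
      ≤ 3 + a + B + lam * c ^ 2 := by
  obtain ⟨hfd, hf0, hf1, θ, g, hg, hfg⟩ := hf
  obtain ⟨l, hld, hl0, hgl, hlre⟩ := starlike_sqrt g hg
  obtain ⟨F, hFdef⟩ : ∃ F : ℂ → ℂ, F = fun z => Complex.exp (l z) := ⟨_, rfl⟩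
  obtain ⟨p, hpdef⟩ : ∃ p : ℂ → ℂ, p = fun z => deriv f z * Complex.exp (-l z) ^ 2 := ⟨_, rfl⟩
  have hFd : DifferentiableOn ℂ F (ball (0 : ℂ) 1) := by rw [hFdef]; exact hld.cexp
  have hpd : DifferentiableOn ℂ p (ball (0 : ℂ) 1) := by
    rw [hpdef]; exact (hfd.deriv isOpen_ball).mul ((hld.neg.cexp).pow 2)
  have hF0 : F 0 = 1 := by simp [hFdef, hl0]
  have hp0 : p 0 = 1 := by simp [hpdef, hl0, hf1]
  have hFre : ∀ z ∈ ball (0 : ℂ) 1, 1 / 2 < (F z).re := by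
    intro z hz; rw [hFdef]; exact hlre z hz
  obtain ⟨e, hedef⟩ : ∃ e : ℂ, e = Complex.exp (θ * Complex.I) := ⟨_, rfl⟩
  have he : ‖e‖ = 1 := by rw [hedef]; exact Complex.norm_exp_ofReal_mul_I θ
  have hpre' : ∀ z ∈ ball (0 : ℂ) 1 \ {0}, 0 ≤ (e * p z).re := by
    intro z hz
    have h := hfg z hz
    have hz0 : z ≠ 0 := hz.2
    rw [hgl z hz.1, ← hedef] at h
    have : e * z * deriv f z / (z * Complex.exp (l z) ^ 2) = e * p z := by
      simp only [hpdef, Complex.exp_neg]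
      have := Complex.exp_ne_zero (l z)
      field_simp
    rw [this] at h
    exact h.le
  have hpre : ∀ z ∈ ball (0 : ℂ) 1, 0 ≤ (e * p z).re := by
    intro z hz
    by_cases hz0 : z = 0
    · subst hz0
      have hcont : ContinuousAt (fun z => (e * p z).re) 0 := by
        have := hpd.continuousOn.continuousAt (isOpen_ball.mem_nhds hz)
        exact Complex.continuous_re.continuousAt.comp (continuousAt_const.mul this)
      have ht : Filter.Tendsto (fun z => (e * p z).re) (nhdsWithin 0 {0}ᶜ) (nhds (e * p 0).re) :=
        hcont.tendsto.mono_left nhdsWithin_le_nhds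
      apply ge_of_tendsto ht
      have hb : ball (0 : ℂ) 1 ∈ nhdsWithin (0 : ℂ) {0}ᶜ :=
        mem_nhdsWithin_of_mem_nhds (isOpen_ball.mem_nhds hz)
      filter_upwards [hb, self_mem_nhdsWithin] with w hw hw0
      exact hpre' w ⟨hw, hw0⟩
    · exact hpre' z ⟨hz, hz0⟩
  have hprod : deriv f = fun z => p z * (F z * F z) := by
    funext z
    simp only [hpdef, hFdef, Complex.exp_neg]
    have := Complex.exp_ne_zero (l z)
    field_simp
  have hFF : DifferentiableOn ℂ (fun z => F z * F z) (ball (0 : ℂ) 1) := hFd.mul hFd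
  have hm : ∀ n, taylorCoeff (fun z => F z * F z) n
      = ∑ i ∈ Finset.range (n + 1), taylorCoeff F i * taylorCoeff F (n - i) :=
    taylor_mul F F hFd hFd
  have hcoef : ∀ n : ℕ, ((n : ℂ) + 1) * taylorCoeff f (n + 1) = ∑ i ∈ Finset.range (n + 1),
      taylorCoeff p i * taylorCoeff (fun z => F z * F z) (n - i) := by
    intro n
    rw [← taylor_deriv, hprod]
    exact taylor_mul p _ hpd hFF n
  have hF0' : taylorCoeff F 0 = 1 := by rw [taylor_zero, hF0]
  have hp0' : taylorCoeff p 0 = 1 := by rw [taylor_zero, hp0]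
  have h3 := hcoef 2
  have h5 := hcoef 4
  simp only [Finset.sum_range_succ, Finset.sum_range_zero, hm, hF0', hp0', zero_add, one_mul,
    mul_one, Nat.reduceAdd, Nat.reduceSub, Nat.cast_ofNat] at h3 h5
  have hlinF := lin_half F hFd hF0 hFre
  have hlinp := lin_tilt p hpd hp0 e he hpre
  generalize taylorCoeff F 1 = F1 at *
  generalize taylorCoeff F 2 = F2 at *
  generalize taylorCoeff F 3 = F3 at *
  generalize taylorCoeff F 4 = F4 at *
  generalize taylorCoeff p 1 = p1 at *
  generalize taylorCoeff p 2 = p2 at *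
  generalize taylorCoeff p 3 = p3 at *
  generalize taylorCoeff p 4 = p4 at *
  obtain ⟨c2, hc2⟩ : ∃ c2 : ℂ, c2 = 2 * lam * c * ζ ^ 2 / 3 := ⟨_, rfl⟩
  obtain ⟨c4, hc4⟩ : ∃ c4 : ℂ, c4 = -(ζ ^ 4 / 5) := ⟨_, rfl⟩
  obtain ⟨K, hKdef⟩ : ∃ K : ℝ, K = 3 + a + B + lam * c ^ 2 := ⟨_, rfl⟩
  obtain ⟨d, hd⟩ : ∃ d : ℂ, d = (starRingEnd ℂ) e ^ 2 := ⟨_, rfl⟩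
  rw [← hd] at hlinp
  have hdn : ‖d‖ ≤ 1 := by rw [hd]; simp [he]
  have hker : ∀ x y w : ℂ, ‖x‖ = 1 → ‖y‖ = 1 → ‖w‖ = 1 →
      (c2 * ((x ^ 2 + y ^ 2 + w ^ 2 + x * y + x * w + y * w) + d * w * (x + y + w))
      + c4 * ((x ^ 4 + y ^ 4 + w ^ 4 + x ^ 3 * y + x ^ 3 * w + y ^ 3 * x + y ^ 3 * w
          + w ^ 3 * x + w ^ 3 * y + x ^ 2 * y ^ 2 + x ^ 2 * w ^ 2 + y ^ 2 * w ^ 2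
          + x ^ 2 * y * w + y ^ 2 * x * w + w ^ 2 * x * y)
        + d * w * (x ^ 3 + y ^ 3 + w ^ 3 + x ^ 2 * y + x ^ 2 * w + y ^ 2 * x + y ^ 2 * w
          + w ^ 2 * x + w ^ 2 * y + x * y * w)) : ℂ).re ≤ K := by
    intro x y w hx hy hw
    rw [hKdef]
    refine le_of_eq_of_le ?_ (kernel_bound_s7 lam a B c ha hB hl hl2 hrel ζ x y w d hζ hx.le hy.le hw.le hdn)
    rw [hc2, hc4]
    congr 1
    ring
  -- the bilinear functional in the Taylor coefficients of two factors
  have stepF : ∀ b1 b2 b3 b4 : ℂ,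
      (∀ x : ℂ, ‖x‖ = 1 → (c2 * (x ^ 2 + x * b1 + b2)
        + c4 * (x ^ 4 + x ^ 3 * b1 + x ^ 2 * b2 + x * b3 + b4)).re ≤ K) →
      (c2 * (F2 + F1 * b1 + b2) + c4 * (F4 + F3 * b1 + F2 * b2 + F1 * b3 + b4)).re ≤ K := by
    intro b1 b2 b3 b4 h
    have := hlinF (c2 * b2 + c4 * b4) (c2 * b1 + c4 * b3) (c2 + c4 * b2) (c4 * b1) c4 K (by
      intro x hx
      refine le_of_eq_of_le ?_ (h x hx)
      congr 1
      ring)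
    refine le_of_eq_of_le ?_ this
    congr 1
    ring
  have stepp : ∀ b1 b2 b3 b4 : ℂ,
      (∀ w : ℂ, ‖w‖ = 1 → (c2 * ((1 + d) * w ^ 2 + (1 + d) * w * b1 + b2)
        + c4 * ((1 + d) * w ^ 4 + (1 + d) * w ^ 3 * b1 + (1 + d) * w ^ 2 * b2
          + (1 + d) * w * b3 + b4)).re ≤ K) →
      (c2 * (p2 + p1 * b1 + b2) + c4 * (p4 + p3 * b1 + p2 * b2 + p1 * b3 + b4)).re ≤ K := by
    intro b1 b2 b3 b4 h
    have := hlinp (c2 * b2 + c4 * b4) (c2 * b1 + c4 * b3) (c2 + c4 * b2) (c4 * b1) c4 K (by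
      intro x hx
      refine le_of_eq_of_le ?_ (h x hx)
      congr 1
      ring)
    refine le_of_eq_of_le ?_ this
    congr 1
    ring
  rw [← hKdef]
  have hfinal := stepp (F1 + F1) (F2 + F1 * F1 + F2) (F3 + F1 * F2 + F2 * F1 + F3)
    (F4 + F1 * F3 + F2 * F2 + F3 * F1 + F4) (by
      intro w hw
      have h1 := stepF (F1 + (1 + d) * w) (F2 + F1 * ((1 + d) * w) + (1 + d) * w ^ 2)
        (F3 + F2 * ((1 + d) * w) + F1 * ((1 + d) * w ^ 2) + (1 + d) * w ^ 3)
        (F4 + F3 * ((1 + d) * w) + F2 * ((1 + d) * w ^ 2) + F1 * ((1 + d) * w ^ 3)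
          + (1 + d) * w ^ 4) (by
        intro x hx
        have h2 := stepF (x + (1 + d) * w) (x ^ 2 + x * ((1 + d) * w) + (1 + d) * w ^ 2)
          (x ^ 3 + x ^ 2 * ((1 + d) * w) + x * ((1 + d) * w ^ 2) + (1 + d) * w ^ 3)
          (x ^ 4 + x ^ 3 * ((1 + d) * w) + x ^ 2 * ((1 + d) * w ^ 2) + x * ((1 + d) * w ^ 3)
            + (1 + d) * w ^ 4) (by
          intro y hy
          refine le_of_eq_of_le ?_ (hker x y w hx hy hw)
          congr 1
          ring)
        refine le_of_eq_of_le ?_ h2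
        congr 1
        ring)
      refine le_of_eq_of_le ?_ h1
      congr 1
      ring)
  refine le_of_eq_of_le ?_ hfinal
  congr 1
  rw [hc2, hc4]
  linear_combination (2 * lam * c * ζ ^ 2 / 3 : ℂ) * h3 - (ζ ^ 4 / 5 : ℂ) * h5

lemma exists_rotation (w : ℂ) : ∃ ζ : ℂ, ‖ζ‖ = 1 ∧ ζ ^ 4 * w = (‖w‖ : ℂ) := by
  refine ⟨Complex.exp ((-(Complex.arg w) / 4 : ℝ) * Complex.I), Complex.norm_exp_ofReal_mul_I _, ?_⟩
  rw [← Complex.exp_nat_mul]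
  nth_rewrite 2 [← Complex.norm_mul_exp_arg_mul_I w]
  rw [mul_left_comm, ← Complex.exp_add]
  have : (((4 : ℕ) : ℂ) * (((-(Complex.arg w) / 4 : ℝ) : ℂ) * Complex.I) + (Complex.arg w : ℂ) * Complex.I) = 0 := by
    push_cast; ring
  rw [this, Complex.exp_zero, mul_one]

theorem generalized_zalcman_closeToConvex_n3_middle_lambda
    (lam : ℝ) (hlam1 : 6 / 7 < lam) (hlam2 : lam < (9 + Real.sqrt 33) / 12)
    (f : ℂ → ℂ) (hf : IsCloseToConvex f) :
    ‖(lam : ℂ) * (taylorCoeff f 3) ^ 2 - taylorCoeff f 5‖ ≤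
      (lam * (12 - 7 * lam) + 3 * (2 - lam) * Real.sqrt (3 * lam * (2 - lam)))
        / (lam * (6 - 4 * lam)) := by
  have h33 : Real.sqrt 33 < 6 := by
    rw [Real.sqrt_lt' (by norm_num)]; norm_num
  have hl : 0 < lam := by linarith
  have hlt : lam < 5 / 4 := by linarith
  have hl2 : 0 < 6 - 4 * lam := by linarith
  obtain ⟨S, hS⟩ : ∃ S, S = Real.sqrt (3 * lam * (2 - lam)) := ⟨_, rfl⟩
  have hS0 : 0 ≤ S := by rw [hS]; exact Real.sqrt_nonneg _
  have hS2 : S ^ 2 = 3 * lam * (2 - lam) := by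
    rw [hS, Real.sq_sqrt]
    exact mul_nonneg (by linarith) (by linarith)
  have hSl : lam < S := by
    by_contra h
    push Not at h
    nlinarith
  rw [← hS]
  have ha : 0 < (S - lam) / lam := div_pos (by linarith) hl
  have hB : (S - lam) / lam * ((lam + S) / (6 - 4 * lam)) = 1 := by
    rw [div_mul_div_comm, div_eq_one_iff_eq (by positivity)]
    linear_combination hS2
  have hrel : (6 - 4 * lam) * ((lam + S) / (6 - 4 * lam)) - lam * ((S - lam) / lam) = 2 * lam := by
    rw [mul_div_cancel₀ _ hl2.ne', mul_div_cancel₀ _ hl.ne']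
    ring
  obtain ⟨ζ, hζ, hrot⟩ := exists_rotation ((lam : ℂ) * (taylorCoeff f 3) ^ 2 - taylorCoeff f 5)
  obtain ⟨A, hA⟩ : ∃ A : ℂ, A = ζ ^ 2 * taylorCoeff f 3 := ⟨_, rfl⟩
  have hb := linear_bound lam _ _ A.re ha hB hl hl2 hrel ζ hζ.le f hf
  have hM : (lam * (12 - 7 * lam) + 3 * (2 - lam) * S) / (lam * (6 - 4 * lam))
      = 3 + (S - lam) / lam + (lam + S) / (6 - 4 * lam) := by
    have h1 := hl.ne'
    have h2 := hl2.ne'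
    rw [div_add_div _ _ h1 h2 |> fun h => (by rw [add_assoc, h] :
      3 + (S - lam) / lam + (lam + S) / (6 - 4 * lam)
        = 3 + ((S - lam) * (6 - 4 * lam) + lam * (lam + S)) / (lam * (6 - 4 * lam)))]
    rw [← sub_eq_iff_eq_add', eq_div_iff (mul_ne_zero h1 h2), sub_mul,
      div_mul_cancel₀ _ (mul_ne_zero h1 h2)]
    ring
  rw [hM]
  have hre := congrArg Complex.re hrot
  rw [Complex.ofReal_re] at hre
  rw [← hre]
  have e1 : (ζ ^ 4 * ((lam : ℂ) * (taylorCoeff f 3) ^ 2 - taylorCoeff f 5)).re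
      = lam * (A.re ^ 2 - A.im ^ 2) - (ζ ^ 4 * taylorCoeff f 5).re := by
    have : ζ ^ 4 * ((lam : ℂ) * (taylorCoeff f 3) ^ 2 - taylorCoeff f 5)
        = (lam : ℂ) * (A * A) - ζ ^ 4 * taylorCoeff f 5 := by rw [hA]; ring
    rw [this, Complex.sub_re, Complex.re_ofReal_mul, Complex.mul_re]
    ring
  have e2 : (2 * lam * A.re * (ζ ^ 2 * taylorCoeff f 3) - ζ ^ 4 * taylorCoeff f 5 : ℂ).re
      = 2 * lam * A.re * A.re - (ζ ^ 4 * taylorCoeff f 5).re := by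
    have : (2 * lam * A.re * (ζ ^ 2 * taylorCoeff f 3) : ℂ) = ((2 * lam * A.re : ℝ) : ℂ) * A := by
      rw [hA]; push_cast; ring
    rw [Complex.sub_re, this, Complex.re_ofReal_mul]
  rw [e1]
  rw [e2] at hb
  nlinarith [mul_nonneg hl.le (sq_nonneg A.im)]
end
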